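/- Let k be any field and let A = k[X,Y,Z]/(XY − Z(Z+1)) be the coordinate ring of the smooth affine quadric Q₂. Then there exists a sequence (ν_n)_{n∈ℕ} of surjective k-algebra homomorphisms ν_n : A → k[T] (closed embeddings of the affine line 𝔸¹ into Q₂, whose images are closed curves isomorphic to 𝔸¹) such that: (i) for all m ≠ n there is no k-algebra automorphism α of A with α(ker ν_m) = ker ν_n (so the corresponding curves are pairwise non-equivalent under automorphisms of Q₂); and (ii) for each n, whenever α is a k-algebra automorphism of A and β is a k-algebra automorphism of k[T] satisfying β ∘ ν_n = ν_n ∘ α, then β is the identity (so the identity is the only automorphism of each curve that extends to an automorphism of Q₂). -/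

import Mathlib

open MvPolynomial

noncomputable section

/-- The polynomial `X*Y - Z*(Z+1)` defining the smooth quadric `Q₂` inside `𝔸³`
(variables: `0 = X`, `1 = Y`, `2 = Z`). -/
def q2Rel (k : Type*) [Field k] : MvPolynomial (Fin 3) k := X 0 * X 1 - X 2 * (X 2 + 1)

/-- The coordinate ring `A = k[X,Y,Z]/(XY - Z(Z+1))` of the smooth quadric `Q₂`. -/
abbrev Q2Ring (k : Type*) [Field k] : Type _ := MvPolynomial (Fin 3) k ⧸ Ideal.span {q2Rel k}

/-!
The complement of the line `X = Z + 1 = 0` in `Q₂` is an affine plane with coordinates `X` and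
`T = Y / (Z + 1)`, and it contains the torus with coordinates `Y` and `T`. The curves are the graphs
`X = x(T)` in this plane, where `x` is monic of even degree: they are closed in `Q₂`, and it is
enough to show that for every automorphism `α` the function `α X` has degree at least `deg x` on
the curve, with equality only if `α X` is a multiple of `X`. Then `deg x` is an invariant of the
curve, and an extendable automorphism of the curve preserves the roots of `x` and their
multiplicities. The bound on the degree comes from two facts about `α X`.

* `α X` is invariant under a nontrivial action of the additive group. Hence its leading monomial on
  the torus, for every order with `Y > T`, is that of a power of `X` or of a power of `Y`.
* `α` lifts along the map from `SL₂` to `Q₂` that sends a matrix to `X = a * b`, `Y = c * d`,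
  `Z = b * c`. Hence `α X = p * q`, where `p` and `q` are sections of line bundles that are dual to
  each other: on the plane, `p` may have a simple pole along the removed line, while `q` has a zero.

Together they leave so few possibilities for the leading monomials of `p` and `q` that, as `deg x`
is even, each of `p` and `q` has only one monomial of maximal degree on the curve.
-/

namespace Q2Lines

section LeadingExponent

variable {R : Type*} [Semiring R] {G : Type*} [AddMonoid G]
  {Γ : Type*} [AddCommMonoid Γ] [LinearOrder Γ]

/-- The elements of a monoid algebra all of whose exponents have `D`-weight at most `n`. -/
def weightLE (D : G →+ Γ) (n : Γ) : Submodule R (AddMonoidAlgebra R G) where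
  carrier := {p | ∀ g, p.coeff g ≠ 0 → D g ≤ n}
  zero_mem' := by simp
  add_mem' {p q} hp hq g hg := by
    rcases ne_or_eq (p.coeff g) 0 with hpg | hpg
    · exact hp g hpg
    · exact hq g fun hqg => hg (by simp [hpg, hqg])
  smul_mem' c p hp g hg := hp g fun hpg => hg (by simp [hpg])

/-- `g` is an exponent of `p` of maximal `D`-weight. -/
structure IsLeading (D : G →+ Γ) (p : AddMonoidAlgebra R G) (g : G) : Prop where
  coeff_ne_zero : p.coeff g ≠ 0
  mem_weightLE : p ∈ weightLE D (D g)

variable {D : G →+ Γ} {p q : AddMonoidAlgebra R G} {g h : G} {m n : Γ}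

lemma weightLE_mono (hmn : m ≤ n) : weightLE (R := R) D m ≤ weightLE D n :=
  fun _ hp g hg => (hp g hg).trans hmn

lemma single_mem_weightLE (g : G) (c : R) : AddMonoidAlgebra.single g c ∈ weightLE D (D g) := by
  classical
  intro g' hg'
  rw [AddMonoidAlgebra.coeff_single, Finsupp.single_apply] at hg'
  rw [(ite_ne_right_iff.mp hg').1]

lemma mul_mem_weightLE [IsOrderedAddMonoid Γ] (hp : p ∈ weightLE D m) (hq : q ∈ weightLE D n) :
    p * q ∈ weightLE D (m + n) := by
  classical
  intro g hg
  obtain ⟨a, ha, b, hb, rfl⟩ := Finset.mem_add.mp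
    (AddMonoidAlgebra.support_coeff_mul_subset p q (Finsupp.mem_support_iff.mpr hg))
  exact map_add D a b ▸ add_le_add
    (hp a (Finsupp.mem_support_iff.mp ha)) (hq b (Finsupp.mem_support_iff.mp hb))

lemma pow_mem_weightLE [IsOrderedAddMonoid Γ] (hp : p ∈ weightLE D n) (i : ℕ) :
    p ^ i ∈ weightLE D (i • n) := by
  induction i with
  | zero => simpa [AddMonoidAlgebra.one_def] using single_mem_weightLE (D := D) 0 (1 : R)
  | succ i ih => simpa only [pow_succ, succ_nsmul] using mul_mem_weightLE ih hp

lemma exists_isLeading (D : G →+ Γ) (hp : p ≠ 0) : ∃ g, IsLeading D p g := by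
  have hne : p.coeff.support.Nonempty := by
    rw [Finsupp.support_nonempty_iff]
    simpa using hp
  obtain ⟨g, hg, hmax⟩ := Finset.exists_max_image p.coeff.support D hne
  exact ⟨g, Finsupp.mem_support_iff.mp hg,
    fun g' hg' => hmax g' (Finsupp.mem_support_iff.mpr hg')⟩

lemma isLeading_single (D : G →+ Γ) (g : G) {c : R} (hc : c ≠ 0) :
    IsLeading D (AddMonoidAlgebra.single g c) g :=
  ⟨by simpa using hc, single_mem_weightLE g c⟩

lemma isLeading_one [Nontrivial R] (D : G →+ Γ) : IsLeading D (1 : AddMonoidAlgebra R G) 0 :=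
  isLeading_single D 0 one_ne_zero

namespace IsLeading

lemma ne_zero (hp : IsLeading D p g) : p ≠ 0 := by
  rintro rfl
  exact hp.coeff_ne_zero rfl

lemma unique (hD : Function.Injective D) (hg : IsLeading D p g) (hh : IsLeading D p h) : g = h :=
  hD (le_antisymm (hh.mem_weightLE g hg.coeff_ne_zero) (hg.mem_weightLE h hh.coeff_ne_zero))

lemma mul [IsOrderedCancelAddMonoid Γ] [NoZeroDivisors R] (hD : Function.Injective D)
    (hp : IsLeading D p g) (hq : IsLeading D q h) : IsLeading D (p * q) (g + h) where
  coeff_ne_zero := by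
    rw [AddMonoidAlgebra.coeff_mul_add_of_uniqueAdd]
    · exact mul_ne_zero hp.coeff_ne_zero hq.coeff_ne_zero
    · intro a b ha hb hab
      have haD := hp.mem_weightLE a (Finsupp.mem_support_iff.mp ha)
      have hbD := hq.mem_weightLE b (Finsupp.mem_support_iff.mp hb)
      have hsum : D a + D b = D g + D h := by rw [← map_add, ← map_add, hab]
      have heq := (add_eq_add_iff_eq_and_eq haD hbD).mp hsum
      exact ⟨hD heq.1, hD heq.2⟩
  mem_weightLE := map_add D g h ▸ mul_mem_weightLE hp.mem_weightLE hq.mem_weightLE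

lemma pow [IsOrderedCancelAddMonoid Γ] [NoZeroDivisors R] [Nontrivial R]
    (hD : Function.Injective D) (hp : IsLeading D p g) (n : ℕ) : IsLeading D (p ^ n) (n • g) := by
  induction n with
  | zero => simpa using isLeading_one D
  | succ n ih => simpa only [pow_succ, succ_nsmul] using ih.mul hD hp

lemma add_of_lt (hp : IsLeading D p g) (hq : q ∈ weightLE D n) (hn : n < D g) :
    IsLeading D (p + q) g where
  coeff_ne_zero := by
    have hqg : q.coeff g = 0 := of_not_not fun h => (hq g h).not_gt hn
    simpa [hqg] using hp.coeff_ne_zero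
  mem_weightLE := add_mem hp.mem_weightLE (weightLE_mono hn.le hq)

end IsLeading

lemma isLeading_single_sub_single {R : Type*} [Ring R] [Nontrivial R] (hgh : D h < D g) :
    IsLeading D (AddMonoidAlgebra.single g (1 : R) - AddMonoidAlgebra.single h 1) g := by
  rw [sub_eq_add_neg]
  exact (isLeading_single D g one_ne_zero).add_of_lt (neg_mem (single_mem_weightLE h 1)) hgh

/-- No cancellation can occur at the largest of finitely many distinct leading exponents. -/
lemma exists_isLeading_linearCombination [NoZeroDivisors R] (hD : Function.Injective D)
    {ι : Type*} {B : ι → AddMonoidAlgebra R G} {e : ι → G} (hB : ∀ i, IsLeading D (B i) (e i))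
    (he : Function.Injective e) {l : ι →₀ R} (hl : l ≠ 0) :
    ∃ i ∈ l.support, IsLeading D (Finsupp.linearCombination R B l) (e i) ∧
      ∀ j ∈ l.support, D (e j) ≤ D (e i) := by
  obtain ⟨i, hi, hmax⟩ := Finset.exists_max_image l.support (fun j => D (e j))
    (Finsupp.support_nonempty_iff.mpr hl)
  have hcoeff (g : G) : (Finsupp.linearCombination R B l).coeff g
      = ∑ j ∈ l.support, l j * (B j).coeff g := by
    rw [Finsupp.linearCombination_apply, Finsupp.sum, AddMonoidAlgebra.coeff_sum,
      Finsupp.finsetSum_apply]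
    rfl
  refine ⟨i, hi, ⟨?_, ?_⟩, hmax⟩
  · rw [hcoeff, Finset.sum_eq_single_of_mem i hi]
    · exact mul_ne_zero (Finsupp.mem_support_iff.mp hi) (hB i).coeff_ne_zero
    · intro j hj hji
      suffices h : (B j).coeff (e i) = 0 by rw [h, mul_zero]
      exact of_not_not fun h =>
        hji (he (hD (le_antisymm (hmax j hj) ((hB j).mem_weightLE _ h))))
  · intro g hg
    rw [hcoeff] at hg
    obtain ⟨j, hj, hne⟩ := Finset.exists_ne_zero_of_sum_ne_zero hg
    exact ((hB j).mem_weightLE g (right_ne_zero_of_mul hne)).trans (hmax j hj)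

lemma exists_expansion_isLeading [NoZeroDivisors R] (hD : Function.Injective D)
    {M : Type*} [AddCommMonoid M] [Module R M] {ι : Type*} {B : ι → M}
    (hspan : Submodule.span R (Set.range B) = ⊤) (φ : M →ₗ[R] AddMonoidAlgebra R G) {e : ι → G}
    (hB : ∀ i, IsLeading D (φ (B i)) (e i)) (he : Function.Injective e) {a : M} (ha : a ≠ 0) :
    ∃ l : ι →₀ R, Finsupp.linearCombination R B l = a ∧
      ∃ i ∈ l.support, IsLeading D (φ a) (e i) ∧ ∀ j ∈ l.support, D (e j) ≤ D (e i) := by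
  obtain ⟨l, rfl⟩ := (Finsupp.mem_span_range_iff_exists_finsupp (R := R) (v := B)).mp
    (hspan ▸ Submodule.mem_top : a ∈ Submodule.span R (Set.range B))
  have hl : l ≠ 0 := by
    rintro rfl
    exact ha (Finsupp.sum_zero_index)
  refine ⟨l, rfl, ?_⟩
  obtain ⟨i, hi, hlead, hmax⟩ := exists_isLeading_linearCombination hD hB he hl
  refine ⟨i, hi, ?_, hmax⟩
  rwa [← Finsupp.linearCombination_apply, Finsupp.apply_linearCombination]

end LeadingExponent

section LexicographicWeights

variable {G Γ Γ' : Type*} [AddMonoid G] [AddMonoid Γ] [AddMonoid Γ']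

/-- The weight which compares by `a` first and breaks ties by `b`. -/
def lexHom (a : G →+ Γ) (b : G →+ Γ') : G →+ Γ ×ₗ Γ' :=
  (toLexAddEquiv (Γ × Γ')).toAddMonoidHom.comp (a.prod b)

lemma lexHom_injective {a : G →+ Γ} {b : G →+ Γ'} (h : Function.Injective (a.prod b)) :
    Function.Injective (lexHom a b) :=
  (toLexAddEquiv (Γ × Γ')).injective.comp h

lemma lexHom_le_iff [LinearOrder Γ] [LinearOrder Γ'] {a : G →+ Γ} {b : G →+ Γ'} {g h : G} :
    lexHom a b g ≤ lexHom a b h ↔ a g < a h ∨ a g = a h ∧ b g ≤ b h :=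
  Prod.Lex.le_iff

lemma lexHom_lt_iff [LinearOrder Γ] [LinearOrder Γ'] {a : G →+ Γ} {b : G →+ Γ'} {g h : G} :
    lexHom a b g < lexHom a b h ↔ a g < a h ∨ a g = a h ∧ b g < b h :=
  Prod.Lex.lt_iff

end LexicographicWeights

section SurfaceMonomials

/-- The monomial `x ^ i * z ^ j` if `0 ≤ i`, and `y ^ (-i) * z ^ j` if `i ≤ 0`. On a surface
`x * y = w(z)` these span the coordinate ring, and indexing them by `ℤ × ℕ` lists each of them
only once. -/
def mon {M : Type*} [Monoid M] (x y z : M) (b : ℤ × ℕ) : M :=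
  x ^ b.1.toNat * y ^ (-b.1).toNat * z ^ b.2

/-- The exponent of `mon x y z b` when `x`, `y`, `z` have exponents `u`, `v`, `w`. -/
def monExponent {M : Type*} [AddMonoid M] (u v w : M) (b : ℤ × ℕ) : M :=
  b.1.toNat • u + (-b.1).toNat • v + b.2 • w

lemma map_mon {M N F : Type*} [Monoid M] [Monoid N] [FunLike F M N] [MonoidHomClass F M N]
    (φ : F) (x y z : M) (b : ℤ × ℕ) : φ (mon x y z b) = mon (φ x) (φ y) (φ z) b := by
  simp only [mon, map_mul, map_pow]

lemma map_monExponent {M N F : Type*} [AddMonoid M] [AddMonoid N] [FunLike F M N]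
    [AddMonoidHomClass F M N] (φ : F) (u v w : M) (b : ℤ × ℕ) :
    φ (monExponent u v w b) = monExponent (φ u) (φ v) (φ w) b := by
  simp only [monExponent, map_add, map_nsmul]

lemma IsLeading.mon {R G Γ : Type*} [Semiring R] [NoZeroDivisors R] [Nontrivial R] [AddMonoid G]
    [AddCommMonoid Γ] [LinearOrder Γ] [IsOrderedCancelAddMonoid Γ] {D : G →+ Γ}
    (hD : Function.Injective D) {x y z : AddMonoidAlgebra R G} {u v w : G}
    (hx : IsLeading D x u) (hy : IsLeading D y v) (hz : IsLeading D z w) (b : ℤ × ℕ) :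
    IsLeading D (mon x y z b) (monExponent u v w b) :=
  ((hx.pow hD _).mul hD (hy.pow hD _)).mul hD (hz.pow hD _)

variable {R A : Type*} [CommSemiring R] [CommSemiring A] [Algebra R A]

lemma mul_mem_of_mem_adjoin {S : Submodule R A} {s : Set A} (hs : ∀ g ∈ s, ∀ a ∈ S, a * g ∈ S)
    {a b : A} (ha : a ∈ S) (hb : b ∈ Algebra.adjoin R s) : a * b ∈ S := by
  induction hb using Algebra.adjoin_induction generalizing a with
  | mem g hg => exact hs g hg a ha
  | algebraMap c => exact Algebra.commutes c a ▸ Algebra.smul_def c a ▸ S.smul_mem c ha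
  | add b c _ _ hb hc => exact mul_add a b c ▸ S.add_mem (hb ha) (hc ha)
  | mul b c _ _ hb hc => exact mul_assoc a b c ▸ hc (hb ha)

lemma mul_mem_span {s : Set A} {g : A} (hs : ∀ b ∈ s, b * g ∈ Submodule.span R s) :
    ∀ a ∈ Submodule.span R s, a * g ∈ Submodule.span R s :=
  fun _ ha => (Submodule.map_span_le (LinearMap.mulRight R g) s _).mpr hs
    (Submodule.mem_map_of_mem ha)

lemma mon_mul_z (x y z : A) (i : ℤ) (j : ℕ) : mon x y z (i, j) * z = mon x y z (i, j + 1) := by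
  simp only [mon, pow_succ, mul_assoc]

lemma mon_mul_x_of_nonneg (x y z : A) {i : ℤ} (hi : 0 ≤ i) (j : ℕ) :
    mon x y z (i, j) * x = mon x y z (i + 1, j) := by
  lift i to ℕ using hi
  have hpos : ((i : ℤ) + 1).toNat = i + 1 := by lia
  have hneg : (-((i : ℤ) + 1)).toNat = 0 := by lia
  simp only [mon, hpos, hneg, Int.toNat_natCast, Int.toNat_neg_natCast]
  ring

lemma mon_mul_x_of_neg (x y z : A) {i : ℤ} (hi : i < 0) (j : ℕ) :
    mon x y z (i, j) * x = mon x y z (i + 1, j) * (x * y) := by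
  have hpos : i.toNat = 0 := by lia
  have hpos' : (i + 1).toNat = 0 := by lia
  have hneg : (-i).toNat = (-(i + 1)).toNat + 1 := by lia
  simp only [mon, hpos, hpos', hneg]
  ring

lemma range_mon_swap (x y z : A) : Set.range (mon y x z) = Set.range (mon x y z) := by
  have hswap : mon y x z = mon x y z ∘ ((Equiv.neg ℤ).prodCongr (Equiv.refl ℕ)) := by
    ext ⟨i, j⟩
    simp [mon, mul_comm]
  rw [hswap, EquivLike.range_comp]

lemma mul_z_mem_span_range_mon (x y z : A) :
    ∀ a ∈ Submodule.span R (Set.range (mon x y z)),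
      a * z ∈ Submodule.span R (Set.range (mon x y z)) := by
  refine mul_mem_span ?_
  rintro _ ⟨⟨i, j⟩, rfl⟩
  rw [mon_mul_z]
  exact Submodule.subset_span ⟨_, rfl⟩

lemma mul_x_mem_span_range_mon {x y z : A} (hxy : x * y ∈ Algebra.adjoin R {z}) :
    ∀ a ∈ Submodule.span R (Set.range (mon x y z)),
      a * x ∈ Submodule.span R (Set.range (mon x y z)) := by
  refine mul_mem_span ?_
  rintro _ ⟨⟨i, j⟩, rfl⟩
  rcases le_or_gt 0 i with hi | hi
  · rw [mon_mul_x_of_nonneg x y z hi]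
    exact Submodule.subset_span ⟨_, rfl⟩
  · rw [mon_mul_x_of_neg x y z hi]
    refine mul_mem_of_mem_adjoin ?_ (Submodule.subset_span ⟨_, rfl⟩) hxy
    rintro _ rfl
    exact mul_z_mem_span_range_mon x y _

lemma span_range_mon_eq_top {x y z : A} (hxy : x * y ∈ Algebra.adjoin R {z})
    (htop : Algebra.adjoin R {x, y, z} = ⊤) : Submodule.span R (Set.range (mon x y z)) = ⊤ := by
  have hone : (1 : A) ∈ Submodule.span R (Set.range (mon x y z)) :=
    Submodule.subset_span ⟨(0, 0), by simp [mon]⟩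
  refine eq_top_iff.mpr fun a _ => one_mul a ▸
    mul_mem_of_mem_adjoin ?_ hone (htop ▸ Algebra.mem_top)
  rintro g (rfl | rfl | rfl)
  · exact mul_x_mem_span_range_mon hxy
  · rw [← range_mon_swap]
    exact mul_x_mem_span_range_mon (mul_comm x g ▸ hxy)
  · exact mul_z_mem_span_range_mon x y g

end SurfaceMonomials

section CoordinateRing

variable (k : Type*) [Field k]

/-- The coordinate function `X` on `Q₂`. -/
def coordX : Q2Ring k := Ideal.Quotient.mk _ (X 0)

/-- The coordinate function `Y` on `Q₂`. -/
def coordY : Q2Ring k := Ideal.Quotient.mk _ (X 1)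

/-- The coordinate function `Z` on `Q₂`. -/
def coordZ : Q2Ring k := Ideal.Quotient.mk _ (X 2)

lemma coordX_mul_coordY : coordX k * coordY k = coordZ k * (coordZ k + 1) := by
  have h : (Ideal.Quotient.mk (Ideal.span {q2Rel k})) (X 0 * X 1 - X 2 * (X 2 + 1)) = 0 :=
    Ideal.Quotient.eq_zero_iff_mem.mpr (Ideal.subset_span rfl)
  rw [map_sub, sub_eq_zero] at h
  simpa [coordX, coordY, coordZ] using h

lemma adjoin_coords : Algebra.adjoin k {coordX k, coordY k, coordZ k} = ⊤ := by
  rw [eq_top_iff, ← (AlgHom.range_eq_top (Ideal.Quotient.mkₐ k (Ideal.span {q2Rel k}))).mpr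
    (Ideal.Quotient.mkₐ_surjective k _), ← Algebra.map_top, ← MvPolynomial.adjoin_range_X,
    AlgHom.map_adjoin]
  apply Algebra.adjoin_mono
  rintro _ ⟨_, ⟨i, rfl⟩, rfl⟩
  fin_cases i
  exacts [Or.inl rfl, Or.inr (Or.inl rfl), Or.inr (Or.inr rfl)]

lemma span_coord_mon : Submodule.span k (Set.range (mon (coordX k) (coordY k) (coordZ k))) = ⊤ := by
  refine span_range_mon_eq_top ?_ (adjoin_coords k)
  have hz := Algebra.self_mem_adjoin_singleton k (coordZ k)
  exact coordX_mul_coordY k ▸ mul_mem hz (add_mem hz (one_mem _))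

variable {k} {R : Type*} [CommRing R] [Algebra k R]

/-- The algebra map `Q2Ring k → R`, i.e. the `R`-point of `Q₂`, with coordinates `x`, `y`, `z`. -/
def liftQ2 (x y z : R) (h : x * y = z * (z + 1)) : Q2Ring k →ₐ[k] R :=
  Ideal.Quotient.liftₐ _ (aeval ![x, y, z]) fun a ha => by
    have hle : Ideal.span {q2Rel k} ≤ RingHom.ker (aeval (R := k) ![x, y, z]) := by
      rw [Ideal.span_singleton_le_iff_mem, RingHom.mem_ker]
      simp [q2Rel, h]
    exact hle ha

section
variable (x y z : R) (h : x * y = z * (z + 1))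

@[simp] lemma liftQ2_coordX : liftQ2 (k := k) x y z h (coordX k) = x :=
  (aeval_X (R := k) ![x, y, z] 0 :)

@[simp] lemma liftQ2_coordY : liftQ2 (k := k) x y z h (coordY k) = y :=
  (aeval_X (R := k) ![x, y, z] 1 :)

@[simp] lemma liftQ2_coordZ : liftQ2 (k := k) x y z h (coordZ k) = z :=
  (aeval_X (R := k) ![x, y, z] 2 :)

end

lemma algHom_ext_coords {φ ψ : Q2Ring k →ₐ[k] R} (hx : φ (coordX k) = ψ (coordX k))
    (hy : φ (coordY k) = ψ (coordY k)) (hz : φ (coordZ k) = ψ (coordZ k)) : φ = ψ :=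
  AlgHom.ext_of_adjoin_eq_top (adjoin_coords k) (by rintro _ (rfl | rfl | rfl) <;> assumption)

end CoordinateRing

section PlaneAndTorus

/-- The coordinate ring of the affine plane, with coordinates `X = X 0` and `T = X 1`. -/
abbrev Plane (k : Type*) [Field k] := MvPolynomial (Fin 2) k

/-- The coordinate ring of the torus with coordinates `Y` and `T`; the exponent `(y, t)` stands
for `Y ^ y * T ^ t`. -/
abbrev Torus (k : Type*) [Field k] := AddMonoidAlgebra k (ℤ × ℤ)

variable (k : Type*) [Field k]

/-- The polynomial `V = 1 + X * T`, which restricts to `Z + 1` on the plane inside `Q₂`. -/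
def planeV : Plane k := 1 + X 0 * X 1

/-- The inclusion of the coordinate rings given by the open embedding of the plane into `Q₂` as
the complement of the line `X = Z + 1 = 0`; on the plane, `T = Y / (Z + 1)`. -/
def toPlane : Q2Ring k →ₐ[k] Plane k :=
  liftQ2 (X 0) (X 1 + X 0 * X 1 ^ 2) (X 0 * X 1) (by ring)

@[simp] lemma toPlane_coordX : toPlane k (coordX k) = X 0 := liftQ2_coordX ..

@[simp] lemma toPlane_coordY : toPlane k (coordY k) = X 1 + X 0 * X 1 ^ 2 := liftQ2_coordY ..

@[simp] lemma toPlane_coordZ : toPlane k (coordZ k) = X 0 * X 1 := liftQ2_coordZ ..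

/-- The restriction of functions to the torus `Y ≠ 0 ≠ T` in the plane, where
`X = Y * T ^ (-2) - T ^ (-1)`. -/
def planeToTorus : Plane k →ₐ[k] Torus k :=
  aeval ![AddMonoidAlgebra.single (1, -2) 1 - AddMonoidAlgebra.single (0, -1) 1,
    AddMonoidAlgebra.single (0, 1) 1]

/-- The restriction of functions from `Q₂` to the torus. -/
def toTorus : Q2Ring k →ₐ[k] Torus k := (planeToTorus k).comp (toPlane k)

lemma toTorus_apply (a : Q2Ring k) : toTorus k a = planeToTorus k (toPlane k a) := rfl

lemma planeToTorus_X : planeToTorus k (X 0) =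
    AddMonoidAlgebra.single (1, -2) 1 - AddMonoidAlgebra.single (0, -1) 1 := by
  simp [planeToTorus]

lemma planeToTorus_T : planeToTorus k (X 1) = AddMonoidAlgebra.single (0, 1) 1 := by
  simp [planeToTorus]

lemma planeToTorus_Z :
    planeToTorus k (X 0 * X 1) =
      AddMonoidAlgebra.single (1, -1) 1 - AddMonoidAlgebra.single 0 1 := by
  rw [map_mul, planeToTorus_X, planeToTorus_T, sub_mul]
  simp only [AddMonoidAlgebra.single_mul_single, mul_one, Prod.mk_add_mk]
  rfl

lemma planeToTorus_V : planeToTorus k (planeV k) = AddMonoidAlgebra.single (1, -1) 1 := by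
  rw [planeV, map_add, map_one, planeToTorus_Z, AddMonoidAlgebra.one_def, add_sub_cancel]

lemma planeToTorus_Y : planeToTorus k (X 1 + X 0 * X 1 ^ 2) = AddMonoidAlgebra.single (1, 0) 1 := by
  have h : (X 1 + X 0 * X 1 ^ 2 : Plane k) = planeV k * X 1 := by
    rw [planeV]
    ring
  rw [h, map_mul, planeToTorus_V, planeToTorus_T]
  simp [AddMonoidAlgebra.single_mul_single]

/-- The exponent of the leading monomial of `X ^ m 0 * T ^ m 1` on the torus, for every weight
with `0 < D (1, -1)`. -/
def torusExponent : (Fin 2 →₀ ℕ) →+ ℤ × ℤ where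
  toFun m := (m 0, m 1 - 2 * m 0)
  map_zero' := by simp
  map_add' m n := by
    simp only [Finsupp.add_apply, Nat.cast_add, Prod.mk_add_mk]
    ring_nf

lemma torusExponent_apply (m : Fin 2 →₀ ℕ) :
    torusExponent m = ((m 0 : ℤ), (m 1 - 2 * m 0 : ℤ)) := rfl

lemma torusExponent_injective : Function.Injective torusExponent := by
  intro m n h
  have h0 : (m 0 : ℤ) = n 0 := congrArg Prod.fst h
  have h1 : (m 1 : ℤ) - 2 * m 0 = n 1 - 2 * n 0 := congrArg Prod.snd h
  ext i
  fin_cases i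
  · exact Nat.cast_injective h0
  · change m 1 = n 1
    lia

lemma monExponent_coords_injective :
    Function.Injective (monExponent ((1, -2) : ℤ × ℤ) (1, 0) (1, -1)) := by
  rintro ⟨i, j⟩ ⟨i', j'⟩ h
  simp only [monExponent, Prod.smul_mk, Prod.mk_add_mk, Prod.mk.injEq, nsmul_eq_mul] at h
  rw [Prod.mk.injEq]
  lia

variable {k} {Γ : Type*} [AddCommGroup Γ] [LinearOrder Γ] {D : ℤ × ℤ →+ Γ}

lemma isLeading_planeToTorus_T : IsLeading D (planeToTorus k (X 1)) (0, 1) := by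
  rw [planeToTorus_T]
  exact isLeading_single D _ one_ne_zero

lemma isLeading_planeToTorus_V : IsLeading D (planeToTorus k (planeV k)) (1, -1) := by
  rw [planeToTorus_V]
  exact isLeading_single D _ one_ne_zero

lemma isLeading_coordY : IsLeading D (toTorus k (coordY k)) (1, 0) := by
  rw [toTorus_apply, toPlane_coordY, planeToTorus_Y]
  exact isLeading_single D _ one_ne_zero

lemma isLeading_coordZ (hpos : 0 < D (1, -1)) :
    IsLeading D (toTorus k (coordZ k)) (1, -1) := by
  rw [toTorus_apply, toPlane_coordZ, planeToTorus_Z]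
  exact isLeading_single_sub_single (by rwa [map_zero])

variable [IsOrderedAddMonoid Γ]

lemma isLeading_planeToTorus_X (hpos : 0 < D (1, -1)) :
    IsLeading D (planeToTorus k (X 0)) (1, -2) := by
  rw [planeToTorus_X]
  refine isLeading_single_sub_single ?_
  have h : ((1, -2) : ℤ × ℤ) = (1, -1) + (0, -1) := rfl
  rw [h, map_add]
  exact lt_add_of_pos_left _ hpos

lemma isLeading_coordX (hpos : 0 < D (1, -1)) :
    IsLeading D (toTorus k (coordX k)) (1, -2) := by
  rw [toTorus_apply, toPlane_coordX]
  exact isLeading_planeToTorus_X hpos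

lemma isLeading_planeToTorus_monomial (hD : Function.Injective D) (hpos : 0 < D (1, -1))
    (m : Fin 2 →₀ ℕ) : IsLeading D (planeToTorus k (monomial m 1)) (torusExponent m) := by
  have hmon : monomial m (1 : k) = X 0 ^ m 0 * X 1 ^ m 1 := by
    simp [monomial_eq, Finsupp.prod_fintype]
  have hexp : torusExponent m = m 0 • (1, -2) + m 1 • (0, 1) := by
    simp only [torusExponent_apply, Prod.smul_mk, Prod.mk_add_mk, nsmul_eq_mul, Prod.mk.injEq]
    lia
  rw [hmon, hexp, map_mul, map_pow, map_pow]
  exact ((isLeading_planeToTorus_X hpos).pow hD _).mul hD (isLeading_planeToTorus_T.pow hD _)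

lemma exists_isLeading_planeToTorus (hD : Function.Injective D) (hpos : 0 < D (1, -1))
    {q : Plane k} (hq : q ≠ 0) :
    ∃ m ∈ q.support, IsLeading D (planeToTorus k q) (torusExponent m) ∧
      ∀ m' ∈ q.support, D (torusExponent m') ≤ D (torusExponent m) := by
  let b := basisMonomials (Fin 2) k
  obtain ⟨l, rfl, m, hm, hlead, hmax⟩ := exists_expansion_isLeading hD b.span_eq
    (planeToTorus k).toLinearMap
    (fun m => by simpa [b] using isLeading_planeToTorus_monomial hD hpos m)
    torusExponent_injective hq
  have hsupp : (Finsupp.linearCombination k b l : Plane k).support = l.support :=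
    congrArg Finsupp.support (b.repr_linearCombination l)
  exact ⟨m, hsupp ▸ hm, hlead, hsupp ▸ hmax⟩

variable (k)

lemma planeToTorus_injective : Function.Injective (planeToTorus k) := by
  rw [injective_iff_map_eq_zero]
  intro q
  contrapose!
  intro hq
  obtain ⟨m, -, hm, -⟩ := exists_isLeading_planeToTorus
    (D := lexHom (AddMonoidHom.fst ℤ ℤ) (AddMonoidHom.snd ℤ ℤ))
    (lexHom_injective fun _ _ h => h) (Prod.Lex.lt_iff.mpr (Or.inl one_pos)) hq
  exact hm.ne_zero

lemma toTorus_injective : Function.Injective (toTorus k) := by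
  rw [injective_iff_map_eq_zero]
  intro a
  contrapose!
  intro ha
  have hD : Function.Injective (lexHom (AddMonoidHom.fst ℤ ℤ) (AddMonoidHom.snd ℤ ℤ)) :=
    lexHom_injective fun _ _ h => h
  have hpos : 0 < lexHom (AddMonoidHom.fst ℤ ℤ) (AddMonoidHom.snd ℤ ℤ) (1, -1) :=
    Prod.Lex.lt_iff.mpr (Or.inl one_pos)
  obtain ⟨_, _, _, _, hlead, _⟩ := exists_expansion_isLeading hD (span_coord_mon k)
    (toTorus k).toLinearMap
    (fun b => by
      simpa only [AlgHom.toLinearMap_apply, map_mon] using IsLeading.mon hD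
        (isLeading_coordX hpos) isLeading_coordY (isLeading_coordZ hpos) b)
    monExponent_coords_injective ha
  exact hlead.ne_zero

lemma toPlane_injective : Function.Injective (toPlane k) :=
  Function.Injective.of_comp (f := planeToTorus k) (toTorus_injective k)

end PlaneAndTorus

section Deformations

variable {k : Type*} [CommSemiring k] {G : Type*} [AddCommMonoid G]

variable (k G) in
/-- The inclusion of `k[G]` into `k[G][s]`, where `k[G][s]` is the monoid algebra of `G × ℕ` and
the exponent `(g, i)` stands for the monomial `g * s ^ i`. -/
def inclConst : AddMonoidAlgebra k G →ₐ[k] AddMonoidAlgebra k (G × ℕ) :=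
  AddMonoidAlgebra.mapDomainAlgHom k k (AddMonoidHom.inl G ℕ)

variable (k G) in
/-- The specialization `k[G][s] → k[G]` at `s = 0`. -/
def evalZero : AddMonoidAlgebra k (G × ℕ) →ₐ[k] AddMonoidAlgebra k G :=
  AddMonoidAlgebra.lift k (AddMonoidAlgebra k G) (G × ℕ)
    { toFun := fun e => if e.toAdd.2 = 0 then AddMonoidAlgebra.single e.toAdd.1 1 else 0
      map_one' := by simp [AddMonoidAlgebra.one_def]
      map_mul' := fun a b => by
        by_cases ha : a.toAdd.2 = 0 <;> by_cases hb : b.toAdd.2 = 0 <;>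
          simp [ha, hb, AddMonoidAlgebra.single_mul_single] }

lemma evalZero_single (g : G) (i : ℕ) (c : k) :
    evalZero k G (AddMonoidAlgebra.single (g, i) c) =
      if i = 0 then AddMonoidAlgebra.single g c else 0 := by
  rw [evalZero, AddMonoidAlgebra.lift_single]
  by_cases h : i = 0 <;> simp [h]

lemma coeff_evalZero (p : AddMonoidAlgebra k (G × ℕ)) (g : G) :
    (evalZero k G p).coeff g = p.coeff (g, 0) := by
  classical
  rw [← AddMonoidAlgebra.sum_coeff_single p]
  simp only [Finsupp.sum, map_sum, AddMonoidAlgebra.coeff_sum, Finsupp.finsetSum_apply]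
  refine Finset.sum_congr rfl ?_
  rintro ⟨h, i⟩ -
  by_cases hi : i = 0 <;>
    simp [evalZero_single, hi, AddMonoidAlgebra.coeff_single, Finsupp.single_apply]

lemma coeff_inclConst_zero (p : AddMonoidAlgebra k G) (g : G) :
    (inclConst k G p).coeff (g, 0) = p.coeff g :=
  Finsupp.mapDomain_apply (fun _ _ h => congrArg Prod.fst h) p.coeff g

lemma coeff_inclConst_of_ne_zero (p : AddMonoidAlgebra k G) (g : G) {i : ℕ} (hi : i ≠ 0) :
    (inclConst k G p).coeff (g, i) = 0 := by
  refine Finsupp.mapDomain_of_notMem_range p.coeff (g, i) ?_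
  rintro ⟨h, hh⟩
  exact hi (congrArg Prod.snd hh).symm

lemma evalZero_inclConst (p : AddMonoidAlgebra k G) : evalZero k G (inclConst k G p) = p := by
  ext g
  rw [coeff_evalZero, coeff_inclConst_zero]

lemma exists_coeff_ne_zero_of_ne_inclConst {p : AddMonoidAlgebra k (G × ℕ)}
    (hp : p ≠ inclConst k G (evalZero k G p)) : ∃ e, e.2 ≠ 0 ∧ p.coeff e ≠ 0 := by
  contrapose! hp
  ext ⟨g, i⟩
  by_cases hi : i = 0
  · rw [hi, coeff_inclConst_zero, coeff_evalZero]
  · rw [coeff_inclConst_of_ne_zero _ _ hi, hp (g, i) hi]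

end Deformations

section SlopeWeights

variable {Γ : Type*} [AddCommGroup Γ]

variable {G : Type*} [AddMonoid G] {D : G →+ Γ} {N : ℕ} {κ : Γ}

/-- The weight `N * D - κ * deg_s` on the exponents of `k[G][s]`. -/
def slopeWeight (D : G →+ Γ) (N : ℕ) (κ : Γ) : G × ℕ →+ Γ :=
  N • D.comp (AddMonoidHom.fst G ℕ) - (multiplesHom Γ κ).comp (AddMonoidHom.snd G ℕ)

lemma slopeWeight_apply (g : G) (i : ℕ) : slopeWeight D N κ (g, i) = N • D g - i • κ := rfl

lemma slopeWeight_zero (g : G) : slopeWeight D N κ (g, 0) = N • D g := by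
  rw [slopeWeight_apply, zero_nsmul, sub_zero]

variable (D N κ) in
/-- The `slopeWeight`, with ties broken by the degree in `s`. -/
def slopeOrder : G × ℕ →+ Γ ×ₗ ℕ := lexHom (slopeWeight D N κ) (AddMonoidHom.snd G ℕ)

lemma slopeOrder_injective [IsAddTorsionFree Γ] (hD : Function.Injective D) (hN : N ≠ 0) :
    Function.Injective (slopeOrder D N κ) := by
  refine lexHom_injective ?_
  rintro ⟨g, i⟩ ⟨h, j⟩ hgh
  obtain ⟨hweight, rfl : i = j⟩ := Prod.mk.inj hgh
  rw [slopeWeight_apply, slopeWeight_apply, sub_left_inj] at hweight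
  rw [hD (nsmul_right_injective hN hweight)]

lemma slopeWeight_le_of_slopeOrder_le [LinearOrder Γ] {e e' : G × ℕ}
    (h : slopeOrder D N κ e ≤ slopeOrder D N κ e') :
    slopeWeight D N κ e ≤ slopeWeight D N κ e' :=
  (lexHom_le_iff.mp h).elim le_of_lt fun h => h.1.le

variable [LinearOrder Γ] [IsOrderedAddMonoid Γ]

lemma exists_max_slope {ι : Type*} {S : Finset ι} (hS : S.Nonempty) (δ : ι → Γ) {n : ι → ℕ}
    (hn : ∀ a ∈ S, n a ≠ 0) : ∃ a ∈ S, ∀ b ∈ S, n a • δ b ≤ n b • δ a := by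
  obtain ⟨a, ha, hmax⟩ := Finset.exists_max_image S (fun b => ((∏ c ∈ S, n c) / n b) • δ b) hS
  refine ⟨a, ha, fun b hb => ?_⟩
  have hscale {c : ι} (hc : c ∈ S) :
      n c • ((∏ c ∈ S, n c) / n c) • δ c = (∏ c ∈ S, n c) • δ c := by
    rw [← mul_nsmul', Nat.mul_div_cancel' (Finset.dvd_prod_of_mem n hc)]
  have hle := nsmul_le_nsmul_right (hmax b hb) (n a * n b)
  rw [mul_nsmul', hscale hb, mul_comm, mul_nsmul', hscale ha, nsmul_left_comm,
    nsmul_left_comm (δ a)] at hle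
  exact (nsmul_le_nsmul_iff_right (Finset.prod_ne_zero_iff.mpr hn)).mp hle

variable {k : Type*} [Semiring k] {ι : Type*} [Finite ι]

/-- The weight is chosen so that `κ / N` is the largest slope `(D g - D (t a)) / i` of an exponent
`(g, i)` of one of the `p a`. -/
lemma exists_slopeWeight {p : ι → AddMonoidAlgebra k (G × ℕ)} {t : ι → G}
    (hzero : ∀ a g, (p a).coeff (g, 0) ≠ 0 → D g ≤ D (t a))
    (hpos : ∃ a e, e.2 ≠ 0 ∧ (p a).coeff e ≠ 0) :
    ∃ (N : ℕ) (κ : Γ), N ≠ 0 ∧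
      (∀ a e, (p a).coeff e ≠ 0 → slopeWeight D N κ e ≤ N • D (t a)) ∧
      ∃ a e, e.2 ≠ 0 ∧ (p a).coeff e ≠ 0 ∧ slopeWeight D N κ e = N • D (t a) := by
  classical
  have := Fintype.ofFinite ι
  let S : Finset (Σ _ : ι, G × ℕ) :=
    Finset.univ.sigma fun a => {e ∈ (p a).coeff.support | e.2 ≠ 0}
  have hS {a e} : ⟨a, e⟩ ∈ S ↔ (p a).coeff e ≠ 0 ∧ e.2 ≠ 0 := by simp [S]
  have hne : S.Nonempty := by
    obtain ⟨a, e, he, hae⟩ := hpos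
    exact ⟨⟨a, e⟩, hS.mpr ⟨hae, he⟩⟩
  obtain ⟨⟨a₀, g₀, i₀⟩, h₀, hmax⟩ := exists_max_slope hne (fun b => D b.2.1 - D (t b.1))
    (n := fun b => b.2.2) fun b hb => (hS.mp hb).2
  refine ⟨i₀, D g₀ - D (t a₀), (hS.mp h₀).2, ?_, a₀, (g₀, i₀), (hS.mp h₀).2, (hS.mp h₀).1, ?_⟩
  · rintro a ⟨g, i⟩ hc
    by_cases hi : i = 0
    · subst hi
      exact slopeWeight_zero (D := D) g ▸ nsmul_le_nsmul_right (hzero a g hc) i₀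
    · have hslope := hmax ⟨a, g, i⟩ (hS.mpr ⟨hc, hi⟩)
      rw [nsmul_sub] at hslope
      exact slopeWeight_apply (D := D) g i ▸ sub_le_comm.mp hslope
  · rw [slopeWeight_apply, nsmul_sub, sub_sub_cancel]

lemma exists_isLeading_slopeOrder {p : ι → AddMonoidAlgebra k (G × ℕ)} {t : ι → G}
    (hzero : ∀ a g, (p a).coeff (g, 0) ≠ 0 → D g ≤ D (t a))
    (ht : ∀ a, (p a).coeff (t a, 0) ≠ 0) (hpos : ∃ a e, e.2 ≠ 0 ∧ (p a).coeff e ≠ 0) :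
    ∃ (N : ℕ) (κ : Γ) (E : ι → G × ℕ), N ≠ 0 ∧
      (∀ a, IsLeading (slopeOrder D N κ) (p a) (E a)) ∧
      (∀ a, slopeWeight D N κ (E a) = N • D (t a)) ∧ ∃ a, (E a).2 ≠ 0 := by
  obtain ⟨N, κ, hN, hle, a₀, e₀, he₀, hc₀, hw₀⟩ := exists_slopeWeight hzero hpos
  have hp (a : ι) : p a ≠ 0 := fun h => ht a (by rw [h]; rfl)
  choose E hE using fun a => exists_isLeading (slopeOrder D N κ) (hp a)
  have hweight (a : ι) : slopeWeight D N κ (E a) = N • D (t a) := by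
    refine le_antisymm (hle a _ (hE a).coeff_ne_zero) ?_
    rw [← slopeWeight_zero (κ := κ)]
    exact slopeWeight_le_of_slopeOrder_le ((hE a).mem_weightLE _ (ht a))
  refine ⟨N, κ, E, hN, hE, hweight, a₀, fun h => he₀ ?_⟩
  have hle₀ := lexHom_le_iff.mp ((hE a₀).mem_weightLE e₀ hc₀)
  rw [hw₀, hweight a₀] at hle₀
  exact Nat.le_zero.mp (h ▸ (hle₀.resolve_left (lt_irrefl _)).2)

end SlopeWeights

section Vertex

variable {k : Type*} [Field k] {Γ : Type*} [AddCommGroup Γ] [LinearOrder Γ] [IsOrderedAddMonoid Γ]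
  {D : ℤ × ℤ →+ Γ} {Φ : Q2Ring k →ₐ[k] AddMonoidAlgebra k ((ℤ × ℤ) × ℕ)}

lemma exists_coord_coeff_ne_zero (hΦ : (evalZero k (ℤ × ℤ)).comp Φ = toTorus k)
    (hne : Φ ≠ (inclConst k (ℤ × ℤ)).comp (toTorus k)) :
    ∃ (a : Fin 3) (e : (ℤ × ℤ) × ℕ), e.2 ≠ 0 ∧
      (Φ (![coordX k, coordY k, coordZ k] a)).coeff e ≠ 0 := by
  by_contra! hcon
  have hconst (a : Fin 3) : Φ (![coordX k, coordY k, coordZ k] a) =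
      (inclConst k (ℤ × ℤ)).comp (toTorus k) (![coordX k, coordY k, coordZ k] a) := by
    rw [← hΦ]
    by_contra h
    obtain ⟨e, he, hc⟩ := exists_coeff_ne_zero_of_ne_inclConst h
    exact hc (hcon a e he)
  exact hne (algHom_ext_coords (hconst 0) (hconst 1) (hconst 2))

lemma exists_isLeading_coords (hD : Function.Injective D) (hpos : 0 < D (1, -1))
    (hΦ : (evalZero k (ℤ × ℤ)).comp Φ = toTorus k)
    (hne : Φ ≠ (inclConst k (ℤ × ℤ)).comp (toTorus k)) :
    ∃ (N : ℕ) (κ : Γ) (u v w : (ℤ × ℤ) × ℕ), N ≠ 0 ∧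
      IsLeading (slopeOrder D N κ) (Φ (coordX k)) u ∧
      IsLeading (slopeOrder D N κ) (Φ (coordY k)) v ∧
      IsLeading (slopeOrder D N κ) (Φ (coordZ k)) w ∧
      slopeWeight D N κ u = N • D (1, -2) ∧ slopeWeight D N κ v = N • D (1, 0) ∧
      slopeWeight D N κ w = N • D (1, -1) ∧ w.2 ≠ 0 := by
  have hcoeff (a : Q2Ring k) (g : ℤ × ℤ) : (Φ a).coeff (g, 0) = (toTorus k a).coeff g := by
    rw [← coeff_evalZero, ← hΦ]
    rfl
  have hlead : ∀ a : Fin 3, IsLeading D (toTorus k (![coordX k, coordY k, coordZ k] a))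
      ((![(1, -2), (1, 0), (1, -1)] : Fin 3 → ℤ × ℤ) a) :=
    Fin.forall_fin_succ.mpr ⟨isLeading_coordX hpos,
      Fin.forall_fin_two.mpr ⟨isLeading_coordY, isLeading_coordZ hpos⟩⟩
  obtain ⟨N, κ, E, hN, hE, hweight, a, ha⟩ := exists_isLeading_slopeOrder
    (fun a g hg => (hlead a).mem_weightLE g (hcoeff _ g ▸ hg))
    (fun a => (hcoeff _ _).trans_ne (hlead a).coeff_ne_zero)
    (exists_coord_coeff_ne_zero hΦ hne)
  refine ⟨N, κ, E 0, E 1, E 2, hN, hE 0, hE 1, hE 2, hweight 0, hweight 1, hweight 2, ?_⟩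
  have hW := slopeOrder_injective (κ := κ) hD hN
  have hZ : IsLeading (slopeOrder D N κ) (Φ (coordZ k) + 1) (E 2) := by
    refine (hE 2).add_of_lt (isLeading_one _).mem_weightLE (lexHom_lt_iff.mpr (Or.inl ?_))
    rw [map_zero, hweight 2]
    exact nsmul_pos hpos hN
  have hrel : Φ (coordX k) * Φ (coordY k) = Φ (coordZ k) * (Φ (coordZ k) + 1) := by
    simpa only [map_mul, map_add, map_one] using congrArg Φ (coordX_mul_coordY k)
  have hsum : E 0 + E 1 = E 2 + E 2 :=
    (hrel ▸ (hE 0).mul hW (hE 1)).unique hW ((hE 2).mul hW hZ)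
  have hdeg : (E 0).2 + (E 1).2 = (E 2).2 + (E 2).2 := congrArg Prod.snd hsum
  fin_cases a <;> simp only [Fin.mk_zero, Fin.mk_one, Fin.reduceFinMk] at ha <;> lia

lemma IsLeading.of_inclConst {R G : Type*} [CommSemiring R] [AddCommMonoid G] {D : G →+ Γ}
    {N : ℕ} {κ : Γ} (hN : N ≠ 0) {p : AddMonoidAlgebra R G} {e : G × ℕ}
    (he : IsLeading (slopeOrder D N κ) (inclConst R G p) e) : e.2 = 0 ∧ IsLeading D p e.1 := by
  obtain ⟨g, i⟩ := e
  obtain rfl : i = 0 := by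
    by_contra hi
    exact he.coeff_ne_zero (coeff_inclConst_of_ne_zero p g hi)
  refine ⟨rfl, coeff_inclConst_zero p g ▸ he.coeff_ne_zero, fun h hh => ?_⟩
  have hle := slopeWeight_le_of_slopeOrder_le
    (he.mem_weightLE (h, 0) ((coeff_inclConst_zero p h).trans_ne hh))
  rw [slopeWeight_zero, slopeWeight_zero] at hle
  exact (nsmul_le_nsmul_iff_right hN).mp hle

/-- The Newton polygon of an invariant of a nontrivial deformation of the torus chart has a
vertex of the form `X ^ i` or `Y ^ i`: a factor `Z` would contribute a positive power of `s`. -/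
theorem isLeading_of_invariant (hD : Function.Injective D) (hpos : 0 < D (1, -1))
    (hΦ : (evalZero k (ℤ × ℤ)).comp Φ = toTorus k)
    (hne : Φ ≠ (inclConst k (ℤ × ℤ)).comp (toTorus k)) {f : Q2Ring k} (hf : f ≠ 0)
    (hinv : Φ f = inclConst k (ℤ × ℤ) (toTorus k f)) :
    ∃ i : ℕ, IsLeading D (toTorus k f) (i • (1, -2)) ∨ IsLeading D (toTorus k f) (i • (1, 0)) := by
  obtain ⟨N, κ, u, v, w, hN, hu, hv, hw, hDu, hDv, hDw, hw0⟩ :=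
    exists_isLeading_coords hD hpos hΦ hne
  have hW := slopeOrder_injective (κ := κ) hD hN
  have hweight (b : ℤ × ℕ) : slopeWeight D N κ (monExponent u v w b) =
      N • D (monExponent (1, -2) (1, 0) (1, -1) b) := by
    rw [map_monExponent, hDu, hDv, hDw]
    exact (map_monExponent ((nsmulAddMonoidHom N).comp D) _ _ _ b).symm
  have hinj : Function.Injective (monExponent u v w) := fun b c hbc =>
    monExponent_coords_injective (hD (nsmul_right_injective hN (by
      simp only [← hweight, hbc])))
  obtain ⟨_, _, ⟨i, j⟩, _, hlead, _⟩ := exists_expansion_isLeading hW (span_coord_mon k)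
    Φ.toLinearMap (fun b => map_mon Φ _ _ _ b ▸ IsLeading.mon hW hu hv hw b) hinj hf
  rw [AlgHom.toLinearMap_apply, hinv] at hlead
  obtain ⟨hsnd, hleadD⟩ := hlead.of_inclConst hN
  have hj : j = 0 := by
    simp only [monExponent, Prod.snd_add, Prod.smul_snd, smul_eq_mul] at hsnd
    exact (Nat.mul_eq_zero.mp (Nat.add_eq_zero_iff.mp hsnd).2).resolve_right hw0
  have hfst : (monExponent u v w (i, j)).1 = monExponent (1, -2) (1, 0) (1, -1) (i, j) := by
    have hij := hweight (i, j)
    rw [← Prod.mk.eta (p := monExponent u v w (i, j)), hsnd, slopeWeight_zero] at hij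
    exact hD (nsmul_right_injective hN hij)
  rw [hfst, hj] at hleadD
  rcases le_total 0 i with hi | hi
  · refine ⟨i.toNat, Or.inl ?_⟩
    simpa [monExponent, Int.toNat_of_nonpos (neg_nonpos.mpr hi)] using hleadD
  · refine ⟨(-i).toNat, Or.inr ?_⟩
    simpa [monExponent, Int.toNat_of_nonpos hi] using hleadD

end Vertex

section AdditiveGroupAction

variable {k : Type*} [Field k] (α : Q2Ring k ≃ₐ[k] Q2Ring k)

/-- The automorphism `α`, followed by the inclusion of `Q2Ring k` into `Torus k [s]`. -/
def constFamily : Q2Ring k →ₐ[k] AddMonoidAlgebra k ((ℤ × ℤ) × ℕ) :=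
  (inclConst k (ℤ × ℤ)).comp ((toTorus k).comp α)

/-- The action `X ↦ X`, `Y ↦ Y + s * (2 * Z + 1) + s ^ 2 * X`, `Z ↦ Z + s * X` of the additive
group on `Q₂`, followed by `constFamily α`. -/
def shearFamily : Q2Ring k →ₐ[k] AddMonoidAlgebra k ((ℤ × ℤ) × ℕ) :=
  let s := AddMonoidAlgebra.single ((0, 0), 1) 1
  liftQ2 (constFamily α (coordX k))
    (constFamily α (coordY k) + s * (2 * constFamily α (coordZ k) + 1)
      + s ^ 2 * constFamily α (coordX k))
    (constFamily α (coordZ k) + s * constFamily α (coordX k)) (by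
      have h := congrArg (constFamily α) (coordX_mul_coordY k)
      simp only [map_mul, map_add, map_one] at h
      linear_combination h)

lemma evalZero_comp_constFamily :
    (evalZero k (ℤ × ℤ)).comp (constFamily α) = (toTorus k).comp α := by
  ext1 a
  exact evalZero_inclConst _

lemma evalZero_comp_shearFamily :
    (evalZero k (ℤ × ℤ)).comp (shearFamily α) = (toTorus k).comp α := by
  rw [← evalZero_comp_constFamily]
  apply algHom_ext_coords <;> simp [shearFamily, evalZero_single]

lemma constFamily_injective : Function.Injective (constFamily α) :=
  Function.Injective.of_comp (f := evalZero k (ℤ × ℤ)) <| by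
    rw [← AlgHom.coe_comp, evalZero_comp_constFamily]
    exact (toTorus_injective k).comp α.injective

lemma shearFamily_ne_constFamily : shearFamily α ≠ constFamily α := by
  intro h
  have hz : shearFamily α (coordZ k) = constFamily α (coordZ k) := by rw [h]
  have hX : constFamily α (coordX k) ≠ 0 := by
    rw [map_ne_zero_iff _ (constFamily_injective α)]
    exact ne_of_apply_ne (toPlane k) (by simp)
  simp [shearFamily, hX] at hz

theorem exists_isLeading_toTorus_apply_coordX {Γ : Type*} [AddCommGroup Γ] [LinearOrder Γ]
    [IsOrderedAddMonoid Γ] {D : ℤ × ℤ →+ Γ} (hD : Function.Injective D) (hpos : 0 < D (1, -1)) :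
    ∃ i : ℕ, IsLeading D (toTorus k (α (coordX k))) (i • (1, -2)) ∨
      IsLeading D (toTorus k (α (coordX k))) (i • (1, 0)) := by
  refine isLeading_of_invariant (Φ := (shearFamily α).comp α.symm) hD hpos ?_ ?_ ?_ ?_
  · rw [← AlgHom.comp_assoc, evalZero_comp_shearFamily]
    ext1 a
    simp
  · intro h
    refine shearFamily_ne_constFamily α ?_
    ext1 a
    simpa [constFamily] using DFunLike.congr_fun h (α a)
  · rw [map_ne_zero_iff _ α.injective]
    exact ne_of_apply_ne (toPlane k) (by simp)
  · simp [shearFamily, constFamily]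

end AdditiveGroupAction

section PoleOrder

variable {k : Type*} [Field k]

variable (k) in
/-- The functions on the plane with a pole of order at most `n` along the line `X = Z + 1 = 0`
of `Q₂`, that is, the sections over `Q₂` of the `n`-th power of the associated line bundle. The
function `1 / T` is a local parameter along this line, so the order of the pole is the degree
in `T` of the restriction to the torus. -/
def poleLE (n : ℤ) : Submodule k (Plane k) :=
  (weightLE (AddMonoidHom.snd ℤ ℤ) n).comap (planeToTorus k).toLinearMap

/-- The weight on the exponents of the torus which compares by the degree in `T` first. -/
def poleWeight : ℤ × ℤ →+ ℤ ×ₗ ℤ := lexHom (AddMonoidHom.snd ℤ ℤ) (AddMonoidHom.fst ℤ ℤ)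

/-- The order of the pole of `q` along the line `X = Z + 1 = 0` is exactly `n`. -/
def HasPoleOrder (q : Plane k) (n : ℤ) : Prop :=
  ∃ y, IsLeading poleWeight (planeToTorus k q) (y, n)

lemma poleWeight_injective : Function.Injective poleWeight :=
  lexHom_injective fun _ _ h => Prod.swap_injective h

lemma snd_le_of_poleWeight_le {g h : ℤ × ℤ} (hgh : poleWeight g ≤ poleWeight h) : g.2 ≤ h.2 :=
  (lexHom_le_iff.mp hgh).elim le_of_lt fun h => h.1.le

lemma poleLE_mono {m n : ℤ} (hmn : m ≤ n) : poleLE k m ≤ poleLE k n :=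
  Submodule.comap_mono (weightLE_mono hmn)

lemma mul_mem_poleLE {p q : Plane k} {m n : ℤ} (hp : p ∈ poleLE k m) (hq : q ∈ poleLE k n) :
    p * q ∈ poleLE k (m + n) := by
  rw [poleLE, Submodule.mem_comap, AlgHom.toLinearMap_apply, map_mul]
  exact mul_mem_weightLE hp hq

lemma pow_mem_poleLE {q : Plane k} {n : ℤ} (hq : q ∈ poleLE k n) (i : ℕ) :
    q ^ i ∈ poleLE k (i • n) := by
  rw [poleLE, Submodule.mem_comap, AlgHom.toLinearMap_apply, map_pow]
  exact pow_mem_weightLE hq i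

lemma exists_hasPoleOrder {q : Plane k} (hq : q ≠ 0) : ∃ n, HasPoleOrder q n := by
  obtain ⟨⟨y, n⟩, h⟩ := exists_isLeading poleWeight
    ((map_ne_zero_iff _ (planeToTorus_injective k)).mpr hq)
  exact ⟨n, y, h⟩

namespace HasPoleOrder

variable {p q : Plane k} {m n : ℤ}

lemma ne_zero (hq : HasPoleOrder q n) : q ≠ 0 := by
  rintro rfl
  obtain ⟨y, hy⟩ := hq
  exact hy.ne_zero (map_zero _)

lemma mem_poleLE_iff (hq : HasPoleOrder q n) : q ∈ poleLE k m ↔ n ≤ m := by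
  obtain ⟨y, hy⟩ := hq
  exact ⟨fun h => h _ hy.coeff_ne_zero,
    fun h g hg => (snd_le_of_poleWeight_le (hy.mem_weightLE g hg)).trans h⟩

lemma mem_poleLE (hq : HasPoleOrder q n) : q ∈ poleLE k n := hq.mem_poleLE_iff.mpr le_rfl

lemma unique (hm : HasPoleOrder q m) (hn : HasPoleOrder q n) : m = n :=
  le_antisymm (hm.mem_poleLE_iff.mp hn.mem_poleLE) (hn.mem_poleLE_iff.mp hm.mem_poleLE)

lemma mul (hp : HasPoleOrder p m) (hq : HasPoleOrder q n) : HasPoleOrder (p * q) (m + n) := by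
  obtain ⟨y, hy⟩ := hp
  obtain ⟨z, hz⟩ := hq
  exact ⟨y + z, map_mul (planeToTorus k) p q ▸ hy.mul poleWeight_injective hz⟩

end HasPoleOrder

lemma isLeading_poleWeight_X : IsLeading poleWeight (planeToTorus k (X 0)) (0, -1) := by
  rw [planeToTorus_X, ← neg_sub]
  have h := isLeading_single_sub_single (R := k) (D := poleWeight) (g := (0, -1)) (h := (1, -2))
    (lexHom_lt_iff.mpr (Or.inl (by decide)))
  exact ⟨neg_ne_zero.mpr h.coeff_ne_zero, neg_mem h.mem_weightLE⟩

lemma hasPoleOrder_C {u : k} (hu : u ≠ 0) : HasPoleOrder (C u : Plane k) 0 := by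
  refine ⟨0, ?_⟩
  rw [← MvPolynomial.algebraMap_eq, AlgHom.commutes]
  exact isLeading_single _ _ hu

lemma hasPoleOrder_X : HasPoleOrder (X 0 : Plane k) (-1) := ⟨0, isLeading_poleWeight_X⟩

lemma hasPoleOrder_T : HasPoleOrder (X 1 : Plane k) 1 := ⟨0, isLeading_planeToTorus_T⟩

lemma hasPoleOrder_V : HasPoleOrder (planeV k) (-1) := ⟨1, isLeading_planeToTorus_V⟩

lemma one_mem_poleLE_iff {n : ℤ} : 1 ∈ poleLE k n ↔ 0 ≤ n :=
  (hasPoleOrder_C one_ne_zero).mem_poleLE_iff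

lemma toPlane_mem_poleLE (a : Q2Ring k) : toPlane k a ∈ poleLE k 0 := by
  have ha : a ∈ Algebra.adjoin k {coordX k, coordY k, coordZ k} :=
    adjoin_coords k ▸ Algebra.mem_top
  induction ha using Algebra.adjoin_induction with
  | mem g hg =>
    rcases hg with rfl | rfl | rfl
    · rw [toPlane_coordX]
      exact hasPoleOrder_X.mem_poleLE_iff.mpr (by decide)
    · have hY : toPlane k (coordY k) = planeV k * X 1 := by
        rw [toPlane_coordY, planeV]
        ring
      exact hY ▸ (hasPoleOrder_V.mul hasPoleOrder_T).mem_poleLE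
    · rw [toPlane_coordZ]
      exact (hasPoleOrder_X.mul hasPoleOrder_T).mem_poleLE
  | algebraMap c =>
    rw [AlgHom.commutes, Algebra.algebraMap_eq_smul_one]
    exact Submodule.smul_mem _ c (one_mem_poleLE_iff.mpr le_rfl)
  | add a b _ _ ha hb => exact map_add (toPlane k) a b ▸ add_mem ha hb
  | mul a b _ _ ha hb => exact map_mul (toPlane k) a b ▸ mul_mem_poleLE ha hb

lemma span_plane_mon : Submodule.span k (Set.range (mon (X 0) (X 1) (planeV k))) = ⊤ := by
  refine span_range_mon_eq_top ?_ ?_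
  · have h : (X 0 * X 1 : Plane k) = planeV k - 1 := by
      rw [planeV]
      ring
    exact h ▸ sub_mem (Algebra.self_mem_adjoin_singleton k _) (one_mem _)
  · rw [eq_top_iff, ← MvPolynomial.adjoin_range_X]
    apply Algebra.adjoin_mono
    rintro _ ⟨i, rfl⟩
    fin_cases i
    exacts [Or.inl rfl, Or.inr (Or.inl rfl)]

lemma poleLE_le_span (n : ℤ) : poleLE k n ≤
    Submodule.span k (mon (X 0) (X 1) (planeV k) '' {b | 0 ≤ n + b.1 + b.2}) := by
  intro q hq
  rcases eq_or_ne q 0 with rfl | hq0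
  · exact zero_mem _
  let e (b : ℤ × ℕ) : ℤ × ℤ := monExponent (0, -1) (0, 1) (1, -1) b
  have he (b : ℤ × ℕ) : e b = (↑b.2, -(b.1 + b.2)) := by
    simp only [e, monExponent, Prod.smul_mk, Prod.mk_add_mk, Prod.mk.injEq, nsmul_eq_mul]
    lia
  have he_inj : Function.Injective e := fun b c hbc => by
    rw [he, he, Prod.mk.injEq] at hbc
    rw [Prod.ext_iff]
    lia
  have hlead_mon (b : ℤ × ℕ) :
      IsLeading poleWeight (planeToTorus k (mon (X 0) (X 1) (planeV k) b)) (e b) :=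
    map_mon (planeToTorus k) _ _ _ b ▸ IsLeading.mon poleWeight_injective
      isLeading_poleWeight_X isLeading_planeToTorus_T isLeading_planeToTorus_V b
  obtain ⟨l, rfl, b₀, -, hlead, hmax⟩ := exists_expansion_isLeading poleWeight_injective
    span_plane_mon (planeToTorus k).toLinearMap
    (e := e) hlead_mon he_inj hq0
  refine (Finsupp.mem_span_image_iff_linearCombination k).mpr ⟨l, fun b hb => ?_, rfl⟩
  have hle := (snd_le_of_poleWeight_le (hmax b hb)).trans (hq _ hlead.coeff_ne_zero)
  rw [he] at hle
  change 0 ≤ n + b.1 + b.2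
  lia

end PoleOrder

section SpecialLinearLift

lemma exists_four_factors {M : Type*} [CommMonoidWithZero M] [IsCancelMulZero M]
    [DecompositionMonoid M] {f g g' h : M} (hf : f ≠ 0) (hfh : f * h = g * g') :
    ∃ a b c d, f = a * b ∧ g' = a * d ∧ g = b * c ∧ h = c * d := by
  obtain ⟨b, a, ⟨c, rfl⟩, ⟨d, rfl⟩, rfl⟩ := exists_dvd_and_dvd_of_dvd_mul (Dvd.intro _ hfh)
  refine ⟨a, b, c, d, mul_comm b a, rfl, rfl, mul_left_cancel₀ hf ?_⟩
  rw [hfh, mul_mul_mul_comm]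

variable {k : Type*} [Field k] {α : Q2Ring k ≃ₐ[k] Q2Ring k}

/-- A lift of `α` to the matrices `!![a, b; c, d]` of determinant `1`, along the map to `Q₂` with
coordinates `X = a * b`, `Y = c * d`, `Z = b * c`; the entries are sections over `Q₂` of a line
bundle and of its inverse. -/
structure SpecialLinearLift (α : Q2Ring k ≃ₐ[k] Q2Ring k) where
  (a b c d : Plane k)
  weight : ℤ
  coordX_eq : toPlane k (α (coordX k)) = a * b
  coordY_eq : toPlane k (α (coordY k)) = c * d
  coordZ_eq : toPlane k (α (coordZ k)) = b * c
  coordZ_add_one_eq : toPlane k (α (coordZ k)) + 1 = a * d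
  a_mem : a ∈ poleLE k weight
  b_mem : b ∈ poleLE k (-weight)
  c_mem : c ∈ poleLE k weight
  d_mem : d ∈ poleLE k (-weight)

lemma exists_weight {a b c d : Plane k} (hab : a * b ∈ poleLE k 0) (hcd : c * d ∈ poleLE k 0)
    (hbc : b * c ∈ poleLE k 0) (hdet : a * d - b * c = 1) (ha : a ≠ 0) (hb : b ≠ 0) (hc : c ≠ 0)
    (hd : d ≠ 0) : ∃ e : ℤ, a ∈ poleLE k e ∧ b ∈ poleLE k (-e) ∧ c ∈ poleLE k e ∧
      d ∈ poleLE k (-e) := by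
  obtain ⟨na, ha⟩ := exists_hasPoleOrder ha
  obtain ⟨nb, hb⟩ := exists_hasPoleOrder hb
  obtain ⟨nc, hc⟩ := exists_hasPoleOrder hc
  obtain ⟨nd, hd⟩ := exists_hasPoleOrder hd
  have had : a * d ∈ poleLE k 0 :=
    sub_eq_iff_eq_add.mp hdet ▸ add_mem (one_mem_poleLE_iff.mpr le_rfl) hbc
  rw [(ha.mul hb).mem_poleLE_iff] at hab
  rw [(hc.mul hd).mem_poleLE_iff] at hcd
  rw [(hb.mul hc).mem_poleLE_iff] at hbc
  rw [(ha.mul hd).mem_poleLE_iff] at had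
  have hmax : 0 ≤ max (na + nd) (nb + nc) := by
    rw [← one_mem_poleLE_iff (k := k), ← hdet]
    exact sub_mem ((ha.mul hd).mem_poleLE_iff.mpr (le_max_left _ _))
      ((hb.mul hc).mem_poleLE_iff.mpr (le_max_right _ _))
  simp only [ha.mem_poleLE_iff, hb.mem_poleLE_iff, hc.mem_poleLE_iff, hd.mem_poleLE_iff]
  rcases le_max_iff.mp hmax with h | h
  · exact ⟨na, by lia⟩
  · exact ⟨-nb, by lia⟩

theorem exists_specialLinearLift (α : Q2Ring k ≃ₐ[k] Q2Ring k) :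
    Nonempty (SpecialLinearLift α) := by
  have hne {u : Q2Ring k} (hu : toPlane k u ≠ 0) : toPlane k (α u) ≠ 0 := by
    rw [map_ne_zero_iff _ (toPlane_injective k), map_ne_zero_iff _ α.injective]
    rintro rfl
    exact hu (map_zero _)
  have hf : toPlane k (α (coordX k)) ≠ 0 := hne (by simp)
  have hg : toPlane k (α (coordZ k)) ≠ 0 := hne (by simp)
  have hg' : toPlane k (α (coordZ k)) + 1 ≠ 0 := by
    have hV : toPlane k (coordZ k + 1) = planeV k := by simp [planeV, add_comm]
    have h := hne (hV ▸ hasPoleOrder_V.ne_zero)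
    rwa [map_add, map_add, map_one, map_one] at h
  have hrel : toPlane k (α (coordX k)) * toPlane k (α (coordY k)) =
      toPlane k (α (coordZ k)) * (toPlane k (α (coordZ k)) + 1) := by
    simpa using congrArg (fun u => toPlane k (α u)) (coordX_mul_coordY k)
  obtain ⟨a, b, c, d, hX, hZ', hZ, hY⟩ := exists_four_factors hf hrel
  obtain ⟨e, ha, hb, hc, hd⟩ := exists_weight (hX ▸ toPlane_mem_poleLE _)
    (hY ▸ toPlane_mem_poleLE _) (hZ ▸ toPlane_mem_poleLE _)
    (by rw [← hZ', ← hZ, add_sub_cancel_left]) (left_ne_zero_of_mul (hX ▸ hf))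
    (right_ne_zero_of_mul (hX ▸ hf)) (right_ne_zero_of_mul (hZ ▸ hg))
    (right_ne_zero_of_mul (hZ' ▸ hg'))
  exact ⟨⟨a, b, c, d, e, hX, hY, hZ, hZ', ha, hb, hc, hd⟩⟩

namespace SpecialLinearLift

variable (L : SpecialLinearLift α)

lemma algebraMap_a_ne_zero : algebraMap (Plane k) (FractionRing (Plane k)) L.a ≠ 0 := by
  rw [map_ne_zero_iff _ (IsFractionRing.injective _ _)]
  refine left_ne_zero_of_mul (b := L.b) ?_
  rw [← L.coordX_eq, map_ne_zero_iff _ (toPlane_injective k), map_ne_zero_iff _ α.injective]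
  exact ne_of_apply_ne (toPlane k) (by simp)

/-- The homomorphism by which `α` acts on rational functions on `Q₂`, restricted to those that are
regular on the plane. -/
def rationalMap : Plane k →ₐ[k] FractionRing (Plane k) :=
  aeval ![algebraMap _ _ (L.a * L.b), algebraMap _ _ L.c / algebraMap _ _ L.a]

lemma rationalMap_X : L.rationalMap (X 0) = algebraMap _ _ (L.a * L.b) := by simp [rationalMap]

lemma rationalMap_T : L.rationalMap (X 1) = algebraMap _ _ L.c / algebraMap _ _ L.a := by
  simp [rationalMap]

lemma rationalMap_XT : L.rationalMap (X 0 * X 1) = algebraMap _ _ (L.b * L.c) := by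
  have ha := L.algebraMap_a_ne_zero
  rw [map_mul, rationalMap_X, rationalMap_T, map_mul, map_mul]
  field_simp

lemma rationalMap_V : L.rationalMap (planeV k) = algebraMap _ _ (L.a * L.d) := by
  rw [planeV, map_add, rationalMap_XT, ← L.coordZ_eq, ← L.coordZ_add_one_eq, map_add, map_one,
    map_one, add_comm]

lemma rationalMap_toPlane (u : Q2Ring k) :
    L.rationalMap (toPlane k u) = algebraMap _ _ (toPlane k (α u)) := by
  have ha := L.algebraMap_a_ne_zero
  suffices h : L.rationalMap.comp (toPlane k) =
      (IsScalarTower.toAlgHom k (Plane k) (FractionRing (Plane k))).comp ((toPlane k).comp α) from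
    DFunLike.congr_fun h u
  apply algHom_ext_coords
  · change L.rationalMap (toPlane k _) = algebraMap _ _ (toPlane k (α _))
    rw [toPlane_coordX, rationalMap_X, L.coordX_eq]
  · change L.rationalMap (toPlane k _) = algebraMap _ _ (toPlane k (α _))
    have hY : toPlane k (coordY k) = planeV k * X 1 := by
      rw [toPlane_coordY, planeV]
      ring
    rw [hY, map_mul, rationalMap_V, rationalMap_T, L.coordY_eq, map_mul, map_mul]
    field_simp
  · change L.rationalMap (toPlane k _) = algebraMap _ _ (toPlane k (α _))
    rw [toPlane_coordZ, rationalMap_XT, L.coordZ_eq]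

lemma exists_eq_zpow_mul_rationalMap_mon {n i : ℤ} {p : ℕ} (h : 0 ≤ n + i + p) :
    ∃ r ∈ poleLE k (L.weight * n), algebraMap _ _ r =
      algebraMap _ (FractionRing (Plane k)) L.a ^ n *
        L.rationalMap (mon (X 0) (X 1) (planeV k) (i, p)) := by
  have ha := L.algebraMap_a_ne_zero
  obtain ⟨w, hw⟩ := Int.eq_ofNat_of_zero_le h
  refine ⟨L.a ^ w * L.b ^ i.toNat * L.c ^ (-i).toNat * L.d ^ p, ?_, ?_⟩
  · have hmem := mul_mem_poleLE (mul_mem_poleLE (mul_mem_poleLE (pow_mem_poleLE L.a_mem w)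
      (pow_mem_poleLE L.b_mem i.toNat)) (pow_mem_poleLE L.c_mem (-i).toNat))
      (pow_mem_poleLE L.d_mem p)
    refine poleLE_mono (le_of_eq ?_) hmem
    simp only [nsmul_eq_mul, ← hw]
    linear_combination -L.weight * Int.toNat_sub_toNat_neg i
  · have hn : n = w - i.toNat + (-i).toNat - p := by lia
    rw [map_mon, rationalMap_X, rationalMap_T, rationalMap_V, hn, zpow_sub₀ ha, zpow_add₀ ha,
      zpow_sub₀ ha]
    simp only [mon, map_mul, map_pow, zpow_natCast, mul_pow, div_pow]
    field_simp

lemma exists_eq_zpow_mul_rationalMap {n : ℤ} {q : Plane k} (hq : q ∈ poleLE k n) :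
    ∃ r ∈ poleLE k (L.weight * n), algebraMap _ _ r =
      algebraMap _ (FractionRing (Plane k)) L.a ^ n * L.rationalMap q := by
  replace hq := poleLE_le_span n hq
  induction hq using Submodule.span_induction with
  | mem _ hb =>
    obtain ⟨⟨i, p⟩, h, rfl⟩ := hb
    exact L.exists_eq_zpow_mul_rationalMap_mon h
  | zero => exact ⟨0, zero_mem _, by rw [map_zero, map_zero, mul_zero]⟩
  | add q q' _ _ hq hq' =>
    obtain ⟨r, hr, hrq⟩ := hq
    obtain ⟨r', hr', hrq'⟩ := hq'
    exact ⟨r + r', add_mem hr hr', by rw [map_add, map_add, mul_add, hrq, hrq']⟩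
  | smul c q _ hq =>
    obtain ⟨r, hr, hrq⟩ := hq
    refine ⟨c • r, Submodule.smul_mem _ c hr, ?_⟩
    rw [map_smul L.rationalMap, mul_smul_comm, ← hrq]
    exact map_smul (IsScalarTower.toAlgHom k (Plane k) (FractionRing (Plane k))) c r

/-- Composing the lifts of `α` and of `α.symm` gives a lift of the identity, whose weight is the
product of the two weights. -/
lemma exists_lift_refl (L₁ : SpecialLinearLift α.symm) :
    ∃ a b c d : Plane k, a * b = X 0 ∧ b * c = X 0 * X 1 ∧ a * d = planeV k ∧
      c ∈ poleLE k (L.weight * L₁.weight) ∧ d ∈ poleLE k (-(L.weight * L₁.weight)) := by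
  obtain ⟨a, -, ha⟩ := L.exists_eq_zpow_mul_rationalMap L₁.a_mem
  obtain ⟨b, -, hb⟩ := L.exists_eq_zpow_mul_rationalMap L₁.b_mem
  obtain ⟨c, hcmem, hc⟩ := L.exists_eq_zpow_mul_rationalMap L₁.c_mem
  obtain ⟨d, hdmem, hd⟩ := L.exists_eq_zpow_mul_rationalMap L₁.d_mem
  have hcancel : algebraMap _ (FractionRing (Plane k)) L.a ^ L₁.weight *
      algebraMap _ (FractionRing (Plane k)) L.a ^ (-L₁.weight) = 1 := by
    rw [← zpow_add₀ L.algebraMap_a_ne_zero, add_neg_cancel, zpow_zero]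
  have hX : L.rationalMap (L₁.a * L₁.b) = algebraMap (Plane k) _ (X 0) := by
    rw [← L₁.coordX_eq, rationalMap_toPlane, α.apply_symm_apply, toPlane_coordX]
  have hZ : L.rationalMap (L₁.b * L₁.c) = algebraMap (Plane k) _ (X 0 * X 1) := by
    rw [← L₁.coordZ_eq, rationalMap_toPlane, α.apply_symm_apply, toPlane_coordZ]
  have hV : L.rationalMap (L₁.a * L₁.d) = algebraMap _ _ (planeV k) := by
    rw [← L₁.coordZ_add_one_eq, map_add, map_one, rationalMap_toPlane, α.apply_symm_apply,
      toPlane_coordZ, ← map_one (algebraMap (Plane k) (FractionRing (Plane k))), ← map_add,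
      planeV, add_comm]
  have hinj := IsFractionRing.injective (Plane k) (FractionRing (Plane k))
  refine ⟨a, b, c, d, hinj ?_, hinj ?_, hinj ?_, hcmem, mul_neg L.weight L₁.weight ▸ hdmem⟩
  · rw [← hX, map_mul, map_mul, ha, hb]
    linear_combination (L.rationalMap L₁.a * L.rationalMap L₁.b) * hcancel
  · rw [← hZ, map_mul, map_mul, hb, hc]
    linear_combination (L.rationalMap L₁.b * L.rationalMap L₁.c) * hcancel
  · rw [← hV, map_mul, map_mul, ha, hd]
    linear_combination (L.rationalMap L₁.a * L.rationalMap L₁.d) * hcancel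

end SpecialLinearLift

lemma eq_one_of_lift_refl {a b c d : Plane k} {n : ℤ} (hX : a * b = X 0) (hZ : b * c = X 0 * X 1)
    (hV : a * d = planeV k) (hc : c ∈ poleLE k n) (hd : d ∈ poleLE k (-n)) : n = 1 := by
  have hXprime : Prime (X 0 : Plane k) := MvPolynomial.X_prime
  have hXa : ¬ X 0 ∣ a := fun h => by
    have hXV : X 0 ∣ planeV k := hV ▸ h.mul_right d
    exact hXprime.not_dvd_one ((dvd_add_left (dvd_mul_right (X 0) (X 1))).mp hXV)
  have ha : IsUnit a := (hXprime.irreducible.isUnit_or_isUnit hX.symm).resolve_right fun hb =>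
    hXa (hX ▸ hb.mul_right_dvd.mpr dvd_rfl)
  obtain ⟨u, hu, rfl⟩ := MvPolynomial.isUnit_iff_eq_C_of_isReduced.mp ha
  have hc_eq : c = C u * X 1 :=
    mul_left_cancel₀ hXprime.ne_zero (by linear_combination C u * hZ - c * hX)
  have hc_order : HasPoleOrder c 1 := hc_eq ▸ (hasPoleOrder_C hu.ne_zero).mul hasPoleOrder_T
  obtain ⟨m, hm⟩ := exists_hasPoleOrder
    (right_ne_zero_of_mul (hV ▸ hasPoleOrder_V.ne_zero) : d ≠ 0)
  have hm_eq : 0 + m = -1 := (hV ▸ (hasPoleOrder_C hu.ne_zero).mul hm).unique hasPoleOrder_V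
  have hn := hc_order.mem_poleLE_iff.mp hc
  have hn' := hm.mem_poleLE_iff.mp hd
  lia

theorem exists_factorization_toPlane_apply_coordX (α : Q2Ring k ≃ₐ[k] Q2Ring k) :
    ∃ p ∈ poleLE k 1, ∃ q ∈ poleLE k (-1), toPlane k (α (coordX k)) = p * q := by
  obtain ⟨L⟩ := exists_specialLinearLift α
  obtain ⟨L₁⟩ := exists_specialLinearLift α.symm
  obtain ⟨a, b, c, d, hX, hZ, hV, hc, hd⟩ := L.exists_lift_refl L₁
  rcases Int.isUnit_iff.mp (IsUnit.of_mul_eq_one _ (eq_one_of_lift_refl hX hZ hV hc hd)) with h | h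
  · exact ⟨L.a, h ▸ L.a_mem, L.b, h ▸ L.b_mem, L.coordX_eq⟩
  · exact ⟨L.b, by simpa [h] using L.b_mem, L.a, h ▸ L.a_mem, L.coordX_eq.trans (mul_comm _ _)⟩

end SpecialLinearLift

section DegreeOnCurve

variable {k : Type*} [Field k]

/-- The restriction of functions on the plane to the curve `T ↦ (x, T)`. -/
def restrictToCurve (x : Polynomial k) : Plane k →ₐ[k] Polynomial k := aeval ![x, Polynomial.X]

lemma restrictToCurve_X (x : Polynomial k) : restrictToCurve x (X 0) = x := by
  simp [restrictToCurve]

lemma restrictToCurve_T (x : Polynomial k) : restrictToCurve x (X 1) = Polynomial.X := by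
  simp [restrictToCurve]

/-- The degree of the restriction of the monomial with exponent `m` to the curve `T ↦ (x, T)`,
where `x` has degree `r`. -/
def curveWeight (r : ℕ) (m : Fin 2 →₀ ℕ) : ℕ := r * m 0 + m 1

/-- `m` is the only exponent of `q` at which `curveWeight r` attains its maximum. -/
structure IsDominant (r : ℕ) (q : Plane k) (m : Fin 2 →₀ ℕ) : Prop where
  mem_support : m ∈ q.support
  lt : ∀ m' ∈ q.support, m' ≠ m → curveWeight r m' < curveWeight r m

/-- `m` is an exponent of `q` of maximal `curveWeight r` and, among those, one with the largest
exponent of `X` if `0 < s` and the smallest one if `s < 0`. -/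
structure IsExtremal (r : ℕ) (s : ℤ) (q : Plane k) (m : Fin 2 →₀ ℕ) : Prop where
  mem_support : m ∈ q.support
  le : ∀ m' ∈ q.support, curveWeight r m' < curveWeight r m ∨
    curveWeight r m' = curveWeight r m ∧ s * m' 0 ≤ s * m 0

/-- The possible pairs of leading exponents of the two factors of the image of the coordinate `X`
under an automorphism. -/
def IsVertexPair (m n : Fin 2 →₀ ℕ) : Prop :=
  (m 1 = 0 ∧ n 1 = 0 ∧ n 0 ≠ 0) ∨ (m 1 = 2 * m 0 + 1 ∧ n 1 + 1 = 2 * n 0)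

lemma degree_restrictToCurve_monomial {x : Polynomial k} (hx : x ≠ 0) (m : Fin 2 →₀ ℕ) {c : k}
    (hc : c ≠ 0) : (restrictToCurve x (monomial m c)).degree = curveWeight x.natDegree m := by
  rw [restrictToCurve, aeval_monomial, Finsupp.prod_fintype _ _ (by simp), Fin.prod_univ_two,
    Polynomial.algebraMap_eq, Polynomial.degree_C_mul hc]
  simp [Polynomial.degree_eq_natDegree hx, curveWeight, mul_comm]

lemma IsDominant.degree_restrictToCurve {x : Polynomial k} (hx : x ≠ 0) {q : Plane k}
    {m : Fin 2 →₀ ℕ} (hm : IsDominant x.natDegree q m) :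
    (restrictToCurve x q).degree = curveWeight x.natDegree m := by
  have hmon (m') (hm' : m' ∈ q.support) :=
    degree_restrictToCurve_monomial hx m' (mem_support_iff.mp hm')
  have hsum : restrictToCurve x q = restrictToCurve x (monomial m (q.coeff m)) +
      ∑ m' ∈ q.support.erase m, restrictToCurve x (monomial m' (q.coeff m')) := by
    conv_lhs => rw [q.as_sum, map_sum, ← Finset.add_sum_erase _ _ hm.mem_support]
  rw [hsum, Polynomial.degree_add_eq_left_of_degree_lt, hmon m hm.mem_support]
  refine (Polynomial.degree_sum_le _ _).trans_lt ?_
  rw [hmon m hm.mem_support, Finset.sup_lt_iff (WithBot.bot_lt_coe _)]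
  intro m' hm'
  obtain ⟨hne, hm'⟩ := Finset.mem_erase.mp hm'
  rw [hmon m' hm']
  exact_mod_cast hm.lt m' hm' hne

lemma IsDominant.natDegree_restrictToCurve_mul {x : Polynomial k} (hx : x ≠ 0) {p q : Plane k}
    {m n : Fin 2 →₀ ℕ} (hm : IsDominant x.natDegree p m) (hn : IsDominant x.natDegree q n) :
    (restrictToCurve x (p * q)).natDegree =
      curveWeight x.natDegree m + curveWeight x.natDegree n := by
  apply Polynomial.natDegree_eq_of_degree_eq_some
  rw [map_mul, Polynomial.degree_mul, hm.degree_restrictToCurve hx, hn.degree_restrictToCurve hx,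
    Nat.cast_add]

lemma curveWeight_eq_iff_of_apply_zero_eq {r : ℕ} {m n : Fin 2 →₀ ℕ} (h : m 0 = n 0) :
    curveWeight r m = curveWeight r n ↔ m = n := by
  rw [curveWeight, curveWeight, h, add_right_inj, DFunLike.ext_iff (f := m), Fin.forall_fin_two,
    and_iff_right h]

lemma IsExtremal.curveWeight_eq {r : ℕ} {s s' : ℤ} {q : Plane k} {m m' : Fin 2 →₀ ℕ}
    (hm : IsExtremal r s q m) (hm' : IsExtremal r s' q m') :
    curveWeight r m = curveWeight r m' := by
  have h := hm.le m' hm'.mem_support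
  have h' := hm'.le m hm.mem_support
  lia

lemma IsExtremal.isDominant {r : ℕ} {q : Plane k} {m : Fin 2 →₀ ℕ} (hmax : IsExtremal r 1 q m)
    (hmin : IsExtremal r (-1) q m) : IsDominant r q m := by
  refine ⟨hmax.mem_support, fun m' hm' => ?_⟩
  contrapose!
  intro hle
  obtain ⟨heq, h⟩ := (hmax.le m' hm').resolve_left hle.not_gt
  have h' := ((hmin.le m' hm').resolve_left hle.not_gt).2
  exact (curveWeight_eq_iff_of_apply_zero_eq (by lia)).mp heq

/-- The order on the exponents of the torus for which leading exponents are extremal in the sense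
of `IsExtremal r s`. -/
def curveOrder (r : ℕ) (s : ℤ) : ℤ × ℤ →+ ℤ ×ₗ ℤ :=
  lexHom ((r + 2 : ℤ) • AddMonoidHom.fst ℤ ℤ + AddMonoidHom.snd ℤ ℤ) (s • AddMonoidHom.fst ℤ ℤ)

lemma curveOrder_injective (r : ℕ) {s : ℤ} (hs : s ≠ 0) : Function.Injective (curveOrder r s) := by
  refine lexHom_injective fun g h hgh => ?_
  simp only [AddMonoidHom.prod_apply, Prod.mk.injEq, AddMonoidHom.add_apply,
    AddMonoidHom.smul_apply, AddMonoidHom.coe_fst, AddMonoidHom.coe_snd, smul_eq_mul] at hgh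
  have hfst : g.1 = h.1 := mul_left_cancel₀ hs hgh.2
  exact Prod.ext hfst (by simpa [hfst] using hgh.1)

lemma curveOrder_pos (r : ℕ) (s : ℤ) : 0 < curveOrder r s (1, -1) := by
  rw [← map_zero (curveOrder r s), curveOrder, lexHom_lt_iff]
  left
  simp only [AddMonoidHom.add_apply, AddMonoidHom.smul_apply, AddMonoidHom.coe_fst,
    AddMonoidHom.coe_snd, smul_eq_mul, map_zero]
  lia

lemma curveOrder_torusExponent_le_iff {r : ℕ} {s : ℤ} {m n : Fin 2 →₀ ℕ} :
    curveOrder r s (torusExponent m) ≤ curveOrder r s (torusExponent n) ↔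
      curveWeight r m < curveWeight r n ∨
        curveWeight r m = curveWeight r n ∧ s * m 0 ≤ s * n 0 := by
  have hweight (m : Fin 2 →₀ ℕ) :
      ((r + 2 : ℤ) • AddMonoidHom.fst ℤ ℤ + AddMonoidHom.snd ℤ ℤ) (torusExponent m) =
        curveWeight r m := by
    simp only [AddMonoidHom.add_apply, AddMonoidHom.smul_apply, AddMonoidHom.coe_fst,
      AddMonoidHom.coe_snd, torusExponent_apply, smul_eq_mul, curveWeight]
    push_cast
    ring
  rw [curveOrder, lexHom_le_iff, hweight, hweight, Nat.cast_lt, Nat.cast_inj]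
  simp [torusExponent_apply]

namespace IsVertexPair

variable {m m' n n' : Fin 2 →₀ ℕ}

lemma of_isLeading {α : Q2Ring k ≃ₐ[k] Q2Ring k} {p q : Plane k}
    (hpq : toPlane k (α (coordX k)) = p * q) (hp : p ∈ poleLE k 1) (hq : q ∈ poleLE k (-1))
    {Γ : Type*} [AddCommGroup Γ] [LinearOrder Γ] [IsOrderedAddMonoid Γ] {D : ℤ × ℤ →+ Γ}
    (hD : Function.Injective D) (hpos : 0 < D (1, -1))
    (hm : IsLeading D (planeToTorus k p) (torusExponent m))
    (hn : IsLeading D (planeToTorus k q) (torusExponent n)) : IsVertexPair m n := by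
  have hlead : IsLeading D (toTorus k (α (coordX k))) (torusExponent m + torusExponent n) := by
    rw [toTorus_apply, hpq, map_mul]
    exact hm.mul hD hn
  have hm_le := hp _ hm.coeff_ne_zero
  have hn_le := hq _ hn.coeff_ne_zero
  obtain ⟨i, h | h⟩ := exists_isLeading_toTorus_apply_coordX α hD hpos
  all_goals
    have heq := hlead.unique hD h
    simp only [torusExponent_apply, AddMonoidHom.coe_snd, Prod.smul_mk, Prod.mk_add_mk,
      Prod.mk.injEq, nsmul_eq_mul] at heq hm_le hn_le
  · exact Or.inl (by lia)
  · exact Or.inr (by lia)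

-- For even `r` the two kinds of pairs are told apart by the parity of `curveWeight r m`.
lemma eq_of_curveWeight_eq (h : IsVertexPair m n) (h' : IsVertexPair m' n') {r : ℕ} (hr : Even r)
    (hr0 : 0 < r) (hm : curveWeight r m = curveWeight r m')
    (hn : curveWeight r n = curveWeight r n') : m = m' ∧ n = n' := by
  suffices h0 : m 0 = m' 0 ∧ n 0 = n' 0 from
    ⟨(curveWeight_eq_iff_of_apply_zero_eq h0.1).mp hm,
      (curveWeight_eq_iff_of_apply_zero_eq h0.2).mp hn⟩
  have heven (m : Fin 2 →₀ ℕ) : Even (r * m 0) := hr.mul_right _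
  simp only [curveWeight] at hm hn
  rcases h with ⟨hm1, hn1, -⟩ | ⟨hm1, hn1⟩ <;> rcases h' with ⟨hm1', hn1', -⟩ | ⟨hm1', hn1'⟩
  · exact ⟨Nat.eq_of_mul_eq_mul_left hr0 (by lia), Nat.eq_of_mul_eq_mul_left hr0 (by lia)⟩
  · have h₁ := heven m
    have h₂ := heven m'
    grind
  · have h₁ := heven m
    have h₂ := heven m'
    grind
  · have hr2 : 0 < r + 2 := by lia
    exact ⟨Nat.eq_of_mul_eq_mul_left hr2 (by linarith),
      Nat.eq_of_mul_eq_mul_left hr2 (by linarith)⟩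

lemma apply_zero_pos (h : IsVertexPair m n) : 0 < n 0 := by
  rcases h with h | h <;> lia

lemma le_curveWeight (h : IsVertexPair m n) (r : ℕ) : r ≤ curveWeight r n :=
  (Nat.le_mul_of_pos_right r h.apply_zero_pos).trans (Nat.le_add_right _ _)

lemma eq_single (h : IsVertexPair m n) {r : ℕ} (hr : 0 < r) (hn : curveWeight r n = r) :
    n = Finsupp.single 0 1 := by
  have hle : r ≤ r * n 0 := Nat.le_mul_of_pos_right r h.apply_zero_pos
  rw [curveWeight] at hn
  have hn1 : n 1 = 0 := by lia
  have hn0 : n 0 = 1 := Nat.eq_of_mul_eq_mul_left hr (by lia)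
  ext i
  fin_cases i
  exacts [by simpa using hn0, by simpa using hn1]

end IsVertexPair

lemma exists_isExtremal {α : Q2Ring k ≃ₐ[k] Q2Ring k} {p q : Plane k}
    (hpq : toPlane k (α (coordX k)) = p * q) (hp : p ∈ poleLE k 1) (hq : q ∈ poleLE k (-1))
    (r : ℕ) {s : ℤ} (hs : s ≠ 0) :
    ∃ m n, IsExtremal r s p m ∧ IsExtremal r s q n ∧ IsVertexPair m n := by
  have hpq0 : p * q ≠ 0 := by
    rw [← hpq, map_ne_zero_iff _ (toPlane_injective k), map_ne_zero_iff _ α.injective]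
    exact ne_of_apply_ne (toPlane k) (by simp)
  have hD := curveOrder_injective r hs
  have hpos := curveOrder_pos r s
  obtain ⟨m, hm, hm_lead, hm_max⟩ :=
    exists_isLeading_planeToTorus hD hpos (left_ne_zero_of_mul hpq0)
  obtain ⟨n, hn, hn_lead, hn_max⟩ :=
    exists_isLeading_planeToTorus hD hpos (right_ne_zero_of_mul hpq0)
  exact ⟨m, n, ⟨hm, fun m' hm' => curveOrder_torusExponent_le_iff.mp (hm_max m' hm')⟩,
    ⟨hn, fun n' hn' => curveOrder_torusExponent_le_iff.mp (hn_max n' hn')⟩,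
    .of_isLeading hpq hp hq hD hpos hm_lead hn_lead⟩

lemma exists_dominant_factorization (α : Q2Ring k ≃ₐ[k] Q2Ring k) {r : ℕ} (hr : Even r)
    (hr0 : 0 < r) :
    ∃ p, ∃ q ∈ poleLE k (-1), ∃ m n, toPlane k (α (coordX k)) = p * q ∧
      IsDominant r p m ∧ IsDominant r q n ∧ IsVertexPair m n := by
  obtain ⟨p, hp, q, hq, hpq⟩ := exists_factorization_toPlane_apply_coordX α
  obtain ⟨m, n, hm, hn, h⟩ := exists_isExtremal hpq hp hq r one_ne_zero
  obtain ⟨m', n', hm', hn', h'⟩ := exists_isExtremal hpq hp hq r (neg_ne_zero.mpr one_ne_zero)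
  obtain ⟨rfl, rfl⟩ :=
    h.eq_of_curveWeight_eq h' hr hr0 (hm.curveWeight_eq hm') (hn.curveWeight_eq hn')
  exact ⟨p, q, hq, m, n, hpq, hm.isDominant hm', hn.isDominant hn', h⟩

lemma IsDominant.eq_C {r : ℕ} (hr : 0 < r) {q : Plane k} {m : Fin 2 →₀ ℕ} (hm : IsDominant r q m)
    (h0 : curveWeight r m = 0) : q = C (q.coeff m) := by
  have hm0 : m = 0 := by
    rw [curveWeight, Nat.add_eq_zero_iff, Nat.mul_eq_zero] at h0
    ext i
    fin_cases i
    exacts [h0.1.resolve_left hr.ne', h0.2]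
  ext m'
  rw [coeff_C, ← hm0]
  split_ifs with h
  · rw [h]
  · by_contra hne
    have hlt := hm.lt m' (mem_support_iff.mpr hne) (Ne.symm h)
    lia

lemma exists_mem_support_of_mem_poleLE {n : ℤ} {q : Plane k} (hq : q ∈ poleLE k n) (hq0 : q ≠ 0) :
    ∃ m ∈ q.support, (m 1 - 2 * m 0 : ℤ) ≤ n := by
  obtain ⟨m, hm, hlead, -⟩ := exists_isLeading_planeToTorus (curveOrder_injective 0 one_ne_zero)
    (curveOrder_pos 0 1) hq0
  exact ⟨m, hm, hq _ hlead.coeff_ne_zero⟩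

-- All other monomials of `q` are powers of `T`, which no cancellation turns into a zero along the
-- line `X = Z + 1 = 0`.
lemma IsDominant.eq_C_mul_X {r : ℕ} {q : Plane k} (hm : IsDominant r q (Finsupp.single 0 1))
    (hq : q ∈ poleLE k (-1)) : q = C (q.coeff (Finsupp.single 0 1)) * X 0 := by
  set c := q.coeff (Finsupp.single 0 1) with hc
  by_contra hne
  have hmem : q - C c * X 0 ∈ poleLE k (-1) := by
    rw [C_mul']
    exact sub_mem hq (Submodule.smul_mem _ c hasPoleOrder_X.mem_poleLE)
  obtain ⟨m, hm_supp, hle⟩ := exists_mem_support_of_mem_poleLE hmem (sub_ne_zero.mpr hne)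
  rw [mem_support_iff, coeff_sub, coeff_C_mul, coeff_X] at hm_supp
  have hm_ne : m ≠ Finsupp.single 0 1 := by
    rintro rfl
    simp [hc] at hm_supp
  rw [if_neg hm_ne.symm, mul_zero, sub_zero, ← mem_support_iff] at hm_supp
  have hlt : r * m 0 + m 1 < r := by
    simpa [curveWeight] using hm.lt m hm_supp hm_ne
  have hm0 : m 0 = 0 := by
    by_contra h
    have hle := Nat.le_mul_of_pos_right r (Nat.pos_of_ne_zero h)
    lia
  lia

theorem natDegree_le_natDegree_restrictToCurve (α : Q2Ring k ≃ₐ[k] Q2Ring k) {x : Polynomial k}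
    (hx : Even x.natDegree) (hx0 : 0 < x.natDegree) :
    x.natDegree ≤ (restrictToCurve x (toPlane k (α (coordX k)))).natDegree := by
  obtain ⟨p, q, -, m, n, hpq, hm, hn, h⟩ := exists_dominant_factorization α hx hx0
  rw [hpq, hm.natDegree_restrictToCurve_mul (Polynomial.ne_zero_of_natDegree_gt hx0) hn]
  exact (h.le_curveWeight _).trans (Nat.le_add_left _ _)

theorem toPlane_apply_coordX_eq_C_mul_X (α : Q2Ring k ≃ₐ[k] Q2Ring k) {x : Polynomial k}
    (hx : Even x.natDegree) (hx0 : 0 < x.natDegree)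
    (hdeg : (restrictToCurve x (toPlane k (α (coordX k)))).natDegree = x.natDegree) :
    ∃ c, toPlane k (α (coordX k)) = C c * X 0 := by
  obtain ⟨p, q, hq, m, n, hpq, hm, hn, h⟩ := exists_dominant_factorization α hx hx0
  rw [hpq, hm.natDegree_restrictToCurve_mul (Polynomial.ne_zero_of_natDegree_gt hx0) hn] at hdeg
  have hle := h.le_curveWeight x.natDegree
  obtain rfl := h.eq_single hx0 (by lia)
  refine ⟨p.coeff m * q.coeff (Finsupp.single 0 1), ?_⟩
  rw [hpq, C_mul, mul_assoc, ← hn.eq_C_mul_X hq, ← hm.eq_C hx0 (by lia)]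

end DegreeOnCurve

section ClosedCurves

lemma mem_of_isCoprime_of_mul_mem {R B : Type*} [CommRing R] [CommRing B] [Algebra R B]
    {S : Subalgebra R B} [Algebra.IsIntegral S B] {a b : S} (hab : IsCoprime (a : B) b) {t : B}
    (ha : t * a ∈ S) (hb : t * b ∈ S) : t ∈ S := by
  have hab' : IsCoprime a b := by
    rw [← Ideal.sup_eq_top_iff_isCoprime] at hab ⊢
    rw [← Ideal.map_eq_top_iff (algebraMap S B) Subtype.val_injective
      (algebraMap_isIntegral_iff.mpr ‹_›), Ideal.map_sup, Ideal.map_span, Ideal.map_span,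
      Set.image_singleton, Set.image_singleton]
    exact hab
  obtain ⟨u, v, huv⟩ := hab'
  have ht : t = u * (t * a) + v * (t * b) := by
    have huv' : (u * a + v * b : B) = 1 := congrArg Subtype.val huv
    linear_combination -t * huv'
  exact ht ▸ add_mem (mul_mem u.2 ha) (mul_mem v.2 hb)

lemma exists_algEquiv_comp_eq_of_map_ker_eq {R A A' B B' : Type*} [CommRing R] [CommRing A]
    [Algebra R A] [CommRing A'] [Algebra R A'] [CommRing B] [Algebra R B] [CommRing B']
    [Algebra R B'] {f : A →ₐ[R] B} {g : A' →ₐ[R] B'} (hf : Function.Surjective f)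
    (hg : Function.Surjective g) {α : A ≃ₐ[R] A'}
    (h : Ideal.map α (RingHom.ker f) = RingHom.ker g) :
    ∃ β : B ≃ₐ[R] B', β.toAlgHom.comp f = g.comp α.toAlgHom := by
  refine ⟨(Ideal.quotientKerAlgEquivOfSurjective hf).symm.trans
    ((Ideal.quotientEquivAlg _ _ α h.symm).trans (Ideal.quotientKerAlgEquivOfSurjective hg)), ?_⟩
  ext a
  change Ideal.quotientKerAlgEquivOfSurjective hg (Ideal.quotientEquivAlg _ _ α h.symm
    ((Ideal.quotientKerAlgEquivOfSurjective hf).symm (f a))) = g (α a)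
  rw [Ideal.quotientKerAlgEquivOfSurjective_symm_apply]
  rfl

lemma algEquiv_apply_eq_comp {R : Type*} [CommSemiring R] (β : Polynomial R ≃ₐ[R] Polynomial R)
    (p : Polynomial R) :
    β p = p.comp (β Polynomial.X) := by
  rw [Polynomial.comp_eq_aeval, Polynomial.aeval_algHom_apply, Polynomial.aeval_X_left_apply]

lemma natDegree_algEquiv_X {R : Type*} [CommSemiring R] [NoZeroDivisors R] [Nontrivial R]
    (β : Polynomial R ≃ₐ[R] Polynomial R) :
    (β Polynomial.X).natDegree = 1 := by
  have h := congrArg Polynomial.natDegree (β.apply_symm_apply Polynomial.X)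
  rw [algEquiv_apply_eq_comp β, Polynomial.natDegree_comp, Polynomial.natDegree_X] at h
  exact Nat.eq_one_of_mul_eq_one_left h

lemma natDegree_algEquiv {R : Type*} [CommSemiring R] [NoZeroDivisors R] [Nontrivial R]
    (β : Polynomial R ≃ₐ[R] Polynomial R) (p : Polynomial R) :
    (β p).natDegree = p.natDegree := by
  rw [algEquiv_apply_eq_comp, Polynomial.natDegree_comp, natDegree_algEquiv_X, mul_one]

lemma isIntegral_of_monic_mem {R : Type*} [CommRing R] [Nontrivial R]
    {S : Subalgebra R (Polynomial R)} {x : Polynomial R} (hx : x.Monic)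
    (hx0 : x.natDegree ≠ 0) (hxS : x ∈ S) : Algebra.IsIntegral S (Polynomial R) := by
  have hT : IsIntegral S (Polynomial.X : Polynomial R) := by
    refine .of_aeval_monic (hx.map (algebraMap R S)) (by rwa [hx.natDegree_map]) ?_
    rw [Polynomial.aeval_map_algebraMap, Polynomial.aeval_X_left_apply]
    exact isIntegral_algebraMap (x := (⟨x, hxS⟩ : S))
  refine ⟨fun q => ?_⟩
  have hq : q ∈ Algebra.adjoin R {(Polynomial.X : Polynomial R)} := by
    rw [Polynomial.adjoin_X]
    trivial
  have hle : Algebra.adjoin R {Polynomial.X} ≤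
      (integralClosure S (Polynomial R)).restrictScalars R :=
    Algebra.adjoin_le (Set.singleton_subset_iff.mpr hT)
  exact hle hq

variable {k : Type*} [Field k]

/-- The comorphism of the curve `T ↦ (x, T + x * T ^ 2, x * T)` in `Q₂`. -/
def curveHom (x : Polynomial k) : Q2Ring k →ₐ[k] Polynomial k :=
  (restrictToCurve x).comp (toPlane k)

lemma curveHom_coordX (x : Polynomial k) : curveHom x (coordX k) = x := by
  simp [curveHom, restrictToCurve_X]

lemma curveHom_coordY (x : Polynomial k) :
    curveHom x (coordY k) = Polynomial.X + x * Polynomial.X ^ 2 := by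
  simp [curveHom, restrictToCurve_X, restrictToCurve_T]

lemma curveHom_coordZ (x : Polynomial k) : curveHom x (coordZ k) = x * Polynomial.X := by
  simp [curveHom, restrictToCurve_X, restrictToCurve_T]

-- On the image of `curveHom x`, the parameter `T` is both `Z / X` and `Y / (Z + 1)`.
theorem curveHom_surjective {x : Polynomial k} (hx : x.Monic) (hx0 : x.natDegree ≠ 0) :
    Function.Surjective (curveHom x) := by
  have hmem (u : Q2Ring k) : curveHom x u ∈ (curveHom x).range := ⟨u, rfl⟩
  have := isIntegral_of_monic_mem hx hx0 (curveHom_coordX x ▸ hmem (coordX k))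
  suffices hT : Polynomial.X ∈ (curveHom x).range by
    rw [← AlgHom.range_eq_top, eq_top_iff, ← Polynomial.adjoin_X]
    exact Algebra.adjoin_le (Set.singleton_subset_iff.mpr hT)
  refine mem_of_isCoprime_of_mul_mem (a := ⟨_, hmem (coordX k)⟩) (b := ⟨_, hmem (coordZ k + 1)⟩)
    ⟨-Polynomial.X, 1, ?_⟩ ?_ ?_
  · change -Polynomial.X * curveHom x (coordX k) + 1 * curveHom x (coordZ k + 1) = 1
    rw [map_add, map_one, curveHom_coordX, curveHom_coordZ]
    ring
  · have h : Polynomial.X * curveHom x (coordX k) = curveHom x (coordZ k) := by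
      rw [curveHom_coordX, curveHom_coordZ, mul_comm]
    exact h ▸ hmem (coordZ k)
  · have h : Polynomial.X * curveHom x (coordZ k + 1) = curveHom x (coordY k) := by
      rw [map_add, map_one, curveHom_coordY, curveHom_coordZ]
      ring
    exact h ▸ hmem (coordY k)

section Equivariance

variable {x x' : Polynomial k} {α : Q2Ring k ≃ₐ[k] Q2Ring k} {β : Polynomial k ≃ₐ[k] Polynomial k}

lemma natDegree_curveHom_apply_coordX
    (h : β.toAlgHom.comp (curveHom x) = (curveHom x').comp α.toAlgHom) :
    (restrictToCurve x' (toPlane k (α (coordX k)))).natDegree = x.natDegree := by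
  have hX : β (curveHom x (coordX k)) = restrictToCurve x' (toPlane k (α (coordX k))) :=
    DFunLike.congr_fun h (coordX k)
  rw [← hX, curveHom_coordX, natDegree_algEquiv]

lemma natDegree_le_of_comp_curveHom_eq (hx' : Even x'.natDegree) (hx'0 : 0 < x'.natDegree)
    (h : β.toAlgHom.comp (curveHom x) = (curveHom x').comp α.toAlgHom) :
    x'.natDegree ≤ x.natDegree :=
  natDegree_curveHom_apply_coordX h ▸ natDegree_le_natDegree_restrictToCurve α hx' hx'0

lemma exists_eq_C_mul_of_comp_curveHom_eq (hx : Even x.natDegree) (hx0 : 0 < x.natDegree)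
    (h : β.toAlgHom.comp (curveHom x) = (curveHom x).comp α.toAlgHom) :
    ∃ c, β x = Polynomial.C c * x := by
  obtain ⟨c, hc⟩ := toPlane_apply_coordX_eq_C_mul_X α hx hx0 (natDegree_curveHom_apply_coordX h)
  refine ⟨c, ?_⟩
  calc β x = β (curveHom x (coordX k)) := by rw [curveHom_coordX]
    _ = restrictToCurve x (toPlane k (α (coordX k))) := DFunLike.congr_fun h (coordX k)
    _ = Polynomial.C c * x := by
      rw [hc, map_mul, restrictToCurve_X, ← MvPolynomial.algebraMap_eq, AlgHom.commutes,
        Polynomial.algebraMap_eq]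

end Equivariance

theorem natDegree_eq_of_map_ker_curveHom_eq {x x' : Polynomial k} (hx : x.Monic) (hx' : x'.Monic)
    (hx_even : Even x.natDegree) (hx_pos : 0 < x.natDegree) (hx'_even : Even x'.natDegree)
    (hx'_pos : 0 < x'.natDegree) {α : Q2Ring k ≃ₐ[k] Q2Ring k}
    (h : Ideal.map α (RingHom.ker (curveHom x)) = RingHom.ker (curveHom x')) :
    x.natDegree = x'.natDegree := by
  obtain ⟨β, hβ⟩ := exists_algEquiv_comp_eq_of_map_ker_eq (curveHom_surjective hx hx_pos.ne')
    (curveHom_surjective hx' hx'_pos.ne') h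
  have hβ_symm : β.symm.toAlgHom.comp (curveHom x') = (curveHom x).comp α.symm.toAlgHom := by
    ext1 a
    have ha : β (curveHom x (α.symm a)) = curveHom x' (α (α.symm a)) :=
      DFunLike.congr_fun hβ (α.symm a)
    rw [α.apply_symm_apply] at ha
    exact β.symm_apply_eq.mpr ha.symm
  exact le_antisymm (natDegree_le_of_comp_curveHom_eq hx_even hx_pos hβ_symm)
    (natDegree_le_of_comp_curveHom_eq hx'_even hx'_pos hβ)

/-- The `X`-coordinates of the curves of the theorem. Their degrees are even and pairwise
different, and their two roots `0` and `1` have different multiplicities, so that no affine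
transformation of the line preserves them up to scalars. -/
def curvePolynomial (k : Type*) [Field k] (n : ℕ) : Polynomial k :=
  Polynomial.X ^ (2 * n + 3) * (Polynomial.X - Polynomial.C 1)

lemma curvePolynomial_monic (n : ℕ) : (curvePolynomial k n).Monic :=
  (Polynomial.monic_X_pow _).mul (Polynomial.monic_X_sub_C 1)

lemma natDegree_curvePolynomial (n : ℕ) : (curvePolynomial k n).natDegree = 2 * (n + 2) := by
  rw [curvePolynomial, (Polynomial.monic_X_pow _).natDegree_mul (Polynomial.monic_X_sub_C 1),
    Polynomial.natDegree_X_pow, Polynomial.natDegree_X_sub_C]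
  ring

lemma even_natDegree_curvePolynomial (n : ℕ) : Even (curvePolynomial k n).natDegree :=
  natDegree_curvePolynomial (k := k) n ▸ even_two_mul _

lemma natDegree_curvePolynomial_pos (n : ℕ) : 0 < (curvePolynomial k n).natDegree := by
  rw [natDegree_curvePolynomial]
  lia

lemma eval_curvePolynomial_eq_zero_iff {n : ℕ} {a : k} :
    (curvePolynomial k n).eval a = 0 ↔ a = 0 ∨ a = 1 := by
  simp [curvePolynomial, sub_eq_zero]

lemma eq_X_of_curvePolynomial_comp_eq {n : ℕ} {b : Polynomial k} (hb : b.natDegree = 1) {c : k}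
    (h : (curvePolynomial k n).comp b = Polynomial.C c * curvePolynomial k n) :
    b = Polynomial.X := by
  obtain ⟨u, hu, v, rfl⟩ := Polynomial.natDegree_eq_one.mp hb
  have heval (a : k) : (curvePolynomial k n).eval (u * a + v) =
      c * (curvePolynomial k n).eval a := by
    simpa [Polynomial.eval_comp] using congrArg (Polynomial.eval a) h
  have hderiv : (Polynomial.derivative (curvePolynomial k n)).eval v * u = 0 := by
    have h' := congrArg (fun p => (Polynomial.derivative p).eval 0) h
    have h0 : (Polynomial.derivative (curvePolynomial k n)).eval 0 = 0 := by
      simp [curvePolynomial, Polynomial.derivative_pow]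
    simpa [Polynomial.derivative_comp, Polynomial.eval_comp, h0, hu] using h'
  have hv : v = 0 := by
    have hv01 : v = 0 ∨ v = 1 := by
      rw [← eval_curvePolynomial_eq_zero_iff (n := n)]
      simpa [curvePolynomial] using heval 0
    refine hv01.resolve_right ?_
    rintro rfl
    simp [curvePolynomial, hu] at hderiv
  have hu1 : u = 1 := by
    have hu01 : u = 0 ∨ u = 1 := by
      rw [← eval_curvePolynomial_eq_zero_iff (n := n)]
      simpa [curvePolynomial, hv] using heval 1
    exact hu01.resolve_left hu
  rw [hu1, hv, map_one, map_zero, one_mul, add_zero]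

theorem eq_refl_of_comp_curveHom_eq {n : ℕ} {α : Q2Ring k ≃ₐ[k] Q2Ring k}
    {β : Polynomial k ≃ₐ[k] Polynomial k}
    (h : β.toAlgHom.comp (curveHom (curvePolynomial k n)) =
      (curveHom (curvePolynomial k n)).comp α.toAlgHom) : β = AlgEquiv.refl := by
  obtain ⟨c, hc⟩ := exists_eq_C_mul_of_comp_curveHom_eq (even_natDegree_curvePolynomial n)
    (natDegree_curvePolynomial_pos n) h
  rw [algEquiv_apply_eq_comp] at hc
  ext1 p
  rw [algEquiv_apply_eq_comp, eq_X_of_curvePolynomial_comp_eq (natDegree_algEquiv_X β) hc,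
    Polynomial.comp_X, AlgEquiv.coe_refl, id_eq]

end ClosedCurves

end Q2Lines

/-- **Theorem 1 (Blanc–van Santen).** Over any field `k`, there is an infinite sequence of
closed embeddings `ν_n : 𝔸¹ ↪ Q₂` (i.e. surjective `k`-algebra homomorphisms `A → k[T]`)
whose images are pairwise non-equivalent under automorphisms of `Q₂`, and such that the
identity is the only automorphism of each image curve extending to an automorphism of `Q₂`. -/
theorem infinitely_many_nonequivalent_lines_in_Q2 (k : Type*) [Field k] :
    ∃ ν : ℕ → (Q2Ring k →ₐ[k] Polynomial k),
      (∀ n, Function.Surjective (ν n)) ∧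
      (∀ m n, m ≠ n →
        ¬ ∃ α : Q2Ring k ≃ₐ[k] Q2Ring k,
            Ideal.map α (RingHom.ker (ν m)) = RingHom.ker (ν n)) ∧
      (∀ (n : ℕ) (α : Q2Ring k ≃ₐ[k] Q2Ring k) (β : Polynomial k ≃ₐ[k] Polynomial k),
          β.toAlgHom.comp (ν n) = (ν n).comp α.toAlgHom → β = AlgEquiv.refl) := by
  refine ⟨fun n => Q2Lines.curveHom (Q2Lines.curvePolynomial k n),
    fun n => Q2Lines.curveHom_surjective (Q2Lines.curvePolynomial_monic n)
      (Q2Lines.natDegree_curvePolynomial_pos n).ne', ?_,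
    fun n α β h => Q2Lines.eq_refl_of_comp_curveHom_eq h⟩
  rintro m n hmn ⟨α, h⟩
  have hdeg := Q2Lines.natDegree_eq_of_map_ker_curveHom_eq (Q2Lines.curvePolynomial_monic m)
    (Q2Lines.curvePolynomial_monic n) (Q2Lines.even_natDegree_curvePolynomial m)
    (Q2Lines.natDegree_curvePolynomial_pos m) (Q2Lines.even_natDegree_curvePolynomial n)
    (Q2Lines.natDegree_curvePolynomial_pos n) h
  rw [Q2Lines.natDegree_curvePolynomial, Q2Lines.natDegree_curvePolynomial] at hdeg
  exact hmn (by lia)
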